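/- arXiv:2312.02639 — 3 statements merged into one kernel-verified Lean document; each statement's English description precedes it below -/
import Mathlib

section
/- For every integer k ≥ 1, the dominance complex D(C_{4k}) is homotopy equivalent to a wedge of three copies of S^{2k−1}, and for i = 1, 2, 3 (with 4k + i ≥ 3) the dominance complex D(C_{4k+i}) is homotopy equivalent to the sphere S^{2k−2+i}. -/
open SimpleGraph

/-- An abstract simplicial complex on the underlying vertex set `V`. -/
structure Cplx (V : Type) where
  faces : Finset V → Prop
  down_closed : ∀ ⦃σ τ : Finset V⦄, σ ⊆ τ → faces τ → faces σ

/-- The dominance complex of a graph: the faces are the subsets of the vertex set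
whose complement is a dominating set. -/
def domCpx {V : Type} [Fintype V] [DecidableEq V] (G : SimpleGraph V) : Cplx V where
  faces σ := ∀ v : V, ∃ w : V, w ∉ σ ∧ (w = v ∨ G.Adj w v)
  down_closed := by
    intro σ τ hst h v
    obtain ⟨w, hw, h2⟩ := h v
    exact ⟨w, fun hc => hw (hst hc), h2⟩

open Classical in
/-- The geometric realization of a simplicial complex, as a subspace of `V → ℝ`. -/
def Cplx.space {V : Type} [Fintype V] (K : Cplx V) : Type :=
  {f : V → ℝ // (∑ v, f v = 1) ∧ (∀ v, 0 ≤ f v) ∧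
    K.faces (Finset.univ.filter fun v => f v ≠ 0)}

instance {V : Type} [Fintype V] (K : Cplx V) : TopologicalSpace K.space :=
  instTopologicalSpaceSubtype

/-- The `d`-dimensional unit sphere. -/
abbrev sph (d : ℕ) : Type := Metric.sphere (0 : EuclideanSpace ℝ (Fin (d + 1))) 1

/-- A base point on the `d`-sphere. -/
noncomputable def basePt (d : ℕ) : sph d :=
  ⟨EuclideanSpace.single 0 1, by simp [EuclideanSpace.norm_single]⟩

/-- The wedge of `c d` copies of the `d`-sphere, over all dimensions `d`
(the basepoints of all the spheres are identified). -/
noncomputable def sphereWedge (c : ℕ → ℕ) : Type :=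
  Quot (fun (x y : Σ d : ℕ, Fin (c d) × sph d) =>
    x = y ∨ (x.2.2 = basePt x.1 ∧ y.2.2 = basePt y.1))

noncomputable instance (c : ℕ → ℕ) : TopologicalSpace (sphereWedge c) :=
  instTopologicalSpaceQuot

namespace Cplx

section Space

variable {V W : Type} [Fintype V] [Fintype W]

/-- The barycentric coordinates of a point of the realization. -/
def space.coord {K : Cplx V} (f : K.space) : V → ℝ := f.1

theorem space_sum {K : Cplx V} (f : K.space) : ∑ v, f.coord v = 1 := f.2.1

theorem space_nonneg {K : Cplx V} (f : K.space) (v : V) : 0 ≤ f.coord v := f.2.2.1 v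

theorem faces_of_subset_support {K : Cplx V} (f : K.space) {τ : Finset V}
    (h : ∀ v ∈ τ, f.coord v ≠ 0) : K.faces τ :=
  K.down_closed (fun v hv => Finset.mem_filter.2 ⟨Finset.mem_univ v, h v hv⟩) f.2.2.2

theorem space_ext {K : Cplx V} {f g : K.space} (h : ∀ v, f.coord v = g.coord v) : f = g :=
  Subtype.ext (funext h)

@[fun_prop]
theorem continuous_coord {K : Cplx V} (v : V) : Continuous fun f : K.space => f.coord v :=
  (continuous_apply v).comp continuous_subtype_val

/-- A continuous family of points of the realization of `K`, given by barycentric coordinates. -/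
def mkMap {X : Type*} [TopologicalSpace X] (K : Cplx V) (g : X → V → ℝ)
    (hg : ∀ v, Continuous fun x => g x v) (hsum : ∀ x, ∑ v, g x v = 1)
    (hnn : ∀ x v, 0 ≤ g x v)
    (hface : ∀ x (τ : Finset V), (∀ v ∈ τ, g x v ≠ 0) → K.faces τ) : C(X, K.space) where
  toFun x := ⟨g x, hsum x, hnn x, hface x _ fun v hv => by simpa using hv⟩
  continuous_toFun := Continuous.subtype_mk (continuous_pi hg) _

@[simp]
theorem mkMap_apply {X : Type*} [TopologicalSpace X] (K : Cplx V) (g : X → V → ℝ)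
    (hg hsum hnn hface) (x : X) (v : V) : (mkMap K g hg hsum hnn hface x).coord v = g x v := rfl

/-- A continuous family of points of the realization of `K`, given by nonnegative coordinates
that are not all zero and are rescaled to have sum one. -/
noncomputable def normMap {X : Type*} [TopologicalSpace X] (K : Cplx V) (g : X → V → ℝ)
    (hg : ∀ v, Continuous fun x => g x v) (hpos : ∀ x, 0 < ∑ v, g x v)
    (hnn : ∀ x v, 0 ≤ g x v)
    (hface : ∀ x (τ : Finset V), (∀ v ∈ τ, g x v ≠ 0) → K.faces τ) : C(X, K.space) :=
  mkMap K (fun x v => g x v / ∑ u, g x u)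
    (fun v => (hg v).div (continuous_finsetSum _ fun u _ => hg u) fun x => (hpos x).ne')
    (fun x => by rw [← Finset.sum_div, div_self (hpos x).ne'])
    (fun x v => div_nonneg (hnn x v) (hpos x).le)
    (fun x τ h => hface x τ fun v hv h0 => h v hv (by rw [h0, zero_div]))

@[simp]
theorem normMap_apply {X : Type*} [TopologicalSpace X] (K : Cplx V) (g : X → V → ℝ)
    (hg hpos hnn hface) (x : X) (v : V) : (normMap K g hg hpos hnn hface x).coord v = g x v / ∑ u, g x u := rfl

/-- If every face containing `σ` stays a face after adding the vertex `w ∉ σ`, then the faces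
containing `σ` can be deleted without changing the homotopy type. -/
theorem homotopyEquiv_of_collapse [DecidableEq V] {K L : Cplx V} (σ : Finset V) (w : V)
    (hσ : σ.Nonempty) (hw : w ∉ σ) (hL : ∀ τ, L.faces τ ↔ K.faces τ ∧ ¬ σ ⊆ τ)
    (hap : ∀ τ, K.faces τ → σ ⊆ τ → K.faces (insert w τ)) :
    Nonempty (ContinuousMap.HomotopyEquiv K.space L.space) := by
  let m : K.space → ℝ := fun f => σ.inf' hσ f.coord
  have hm_cont : Continuous m := Continuous.finset_inf'_apply hσ fun v _ => continuous_coord v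
  have hm_le : ∀ (f : K.space) v, v ∈ σ → m f ≤ f.coord v := fun f v hv => Finset.inf'_le _ hv
  have hm_nn : ∀ f : K.space, 0 ≤ m f := fun f =>
    Finset.le_inf' _ _ fun v _ => space_nonneg f v
  have hm_eq : ∀ f : K.space, ∃ v ∈ σ, m f = f.coord v := fun f =>
    Finset.exists_mem_eq_inf' hσ f.coord
  let g : ℝ → K.space → V → ℝ := fun t f v =>
    f.coord v + t * m f * ((if v = w then (σ.card : ℝ) else 0) - if v ∈ σ then 1 else 0)
  have hg_sum : ∀ t f, ∑ v, g t f v = 1 := by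
    intro t f
    simp only [g]
    rw [Finset.sum_add_distrib, ← Finset.mul_sum, Finset.sum_sub_distrib]
    simp [space_sum f]
  have hg_nn : ∀ t f v, 0 ≤ t → t ≤ 1 → 0 ≤ g t f v := by
    intro t f v h0 h1
    have h2 : t * m f ≤ m f := mul_le_of_le_one_left (hm_nn f) h1
    have h3 : 0 ≤ t * m f := mul_nonneg h0 (hm_nn f)
    have h4 := space_nonneg f v
    simp only [g]
    by_cases hv : v ∈ σ
    · have hvw : v ≠ w := fun h => hw (h ▸ hv)
      have := hm_le f v hv
      simp only [hv, hvw, if_true, if_false]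
      linarith
    · simp only [hv, if_false, sub_zero]
      refine add_nonneg h4 (mul_nonneg h3 ?_)
      split_ifs <;> positivity
  have hg_face : ∀ t f (τ : Finset V), (∀ v ∈ τ, g t f v ≠ 0) → K.faces τ := by
    intro t f τ hτ
    by_cases hm0 : m f = 0
    · refine faces_of_subset_support f fun v hv => ?_
      simpa [g, hm0] using hτ v hv
    · have hσf : K.faces (Finset.univ.filter fun v => f.coord v ≠ 0) :=
        faces_of_subset_support f fun v hv => by simpa using hv
      refine K.down_closed ?_ (hap _ hσf fun v hv => ?_)
      · intro v hv
        by_cases hvw : v = w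
        · simp [hvw]
        · by_contra hcon
          have hf0 : f.coord v = 0 := by simpa [hvw] using hcon
          have hvσ : v ∉ σ := fun h => hm0 (le_antisymm (hf0 ▸ hm_le f v h) (hm_nn f))
          exact hτ v hv (by simp [g, hf0, hvw, hvσ])
      · have := hm_le f v hv
        have h0 : 0 < m f := lt_of_le_of_ne (hm_nn f) (Ne.symm hm0)
        simpa using (h0.trans_le this).ne'
  have hg_cont : ∀ v, Continuous fun p : ℝ × K.space => g p.1 p.2 v := by
    intro v
    simp only [g]
    exact ((continuous_coord v).comp continuous_snd).add
      ((continuous_fst.mul (hm_cont.comp continuous_snd)).mul continuous_const)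
  let r : C(K.space, L.space) := mkMap L (g 1)
    (fun v => (hg_cont v).comp (by fun_prop : Continuous fun f : K.space => ((1 : ℝ), f)))
    (hg_sum 1) (fun f v => hg_nn 1 f v zero_le_one le_rfl)
    (fun f τ hτ => by
      refine (hL τ).2 ⟨hg_face 1 f τ hτ, fun hστ => ?_⟩
      obtain ⟨v, hv, hmv⟩ := hm_eq f
      have hvw : v ≠ w := fun h => hw (h ▸ hv)
      exact hτ v (hστ hv) (by simp [g, hv, hvw, hmv]))
  let i : C(L.space, K.space) := mkMap K space.coord (fun v => continuous_coord v)
    space_sum space_nonneg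
    (fun f τ hτ => ((hL τ).1 (faces_of_subset_support f hτ)).1)
  refine ⟨r, i, ⟨?_⟩, ?_⟩
  · let H : C(unitInterval × K.space, K.space) := mkMap K (fun p => g (1 - p.1.1) p.2)
      (fun v => (hg_cont v).comp (by fun_prop :
        Continuous fun p : unitInterval × K.space => ((1 : ℝ) - p.1.1, p.2)))
      (fun p => hg_sum _ _)
      (fun p v => hg_nn _ _ _ (by linarith [p.1.2.2]) (by linarith [p.1.2.1]))
      (fun p => hg_face _ _)
    refine ⟨H, fun f => space_ext fun v => ?_, fun f => space_ext fun v => ?_⟩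
    · simp [H, r, i]
    · simp [H, g]
  · convert ContinuousMap.Homotopic.refl _
    ext f
    refine space_ext fun v => ?_
    have hm0 : m (i f) = 0 := by
      by_contra hm0
      have h0 : 0 < m (i f) := lt_of_le_of_ne (hm_nn _) (Ne.symm hm0)
      refine ((hL σ).1 (faces_of_subset_support f fun v hv => ?_)).2 (Finset.Subset.refl _)
      exact (h0.trans_le (hm_le (i f) v hv)).ne'
    simp [r, g, hm0, i]

/-- Relabelling the vertices of a complex, possibly dropping labels that are not vertices. -/
theorem homotopyEquiv_of_embedding {K : Cplx V} {L : Cplx W} (e : W ↪ V)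
    (h : ∀ τ, L.faces τ ↔ K.faces (τ.map e))
    (hr : ∀ τ, K.faces τ → ∀ v ∈ τ, v ∈ Set.range e) :
    Nonempty (ContinuousMap.HomotopyEquiv K.space L.space) := by
  have hzero : ∀ (f : K.space) v, v ∉ Set.range e → f.coord v = 0 := by
    intro f v hv
    by_contra h0
    exact hv (hr {v} (faces_of_subset_support f (by simpa using h0)) v (by simp))
  let a : C(K.space, L.space) := mkMap L (fun f u => f.coord (e u)) (fun u => continuous_coord _)
    (fun f => by
      rw [← space_sum f, ← Finset.sum_map Finset.univ e f.coord]
      refine Finset.sum_subset (Finset.subset_univ _) fun v _ hv => hzero f v ?_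
      simpa using hv)
    (fun f u => space_nonneg f _)
    (fun f τ hτ => (h τ).2 (faces_of_subset_support f (by simpa using hτ)))
  let b : C(L.space, K.space) := mkMap K (fun f => Function.extend e f.coord 0)
    (fun v => by
      by_cases hv : v ∈ Set.range e
      · obtain ⟨u, rfl⟩ := hv
        simpa [e.injective.extend_apply] using continuous_coord u
      · have h0 : ∀ f : W → ℝ, Function.extend e f 0 v = 0 := fun f => by
          rw [Function.extend_apply' _ _ _ (by simpa using hv)]; rfl
        simpa [h0] using continuous_const)
    (fun f => by
      rw [← space_sum f]
      have : ∑ u, f.coord u = ∑ v ∈ Finset.univ.map e, Function.extend e f.coord 0 v := by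
        simp [Finset.sum_map, e.injective.extend_apply]
      rw [this]
      refine (Finset.sum_subset (Finset.subset_univ _) fun v _ hv => ?_).symm
      rw [Function.extend_apply' _ _ _ (by simpa using hv)]; rfl)
    (fun f v => by
      by_cases hv : ∃ u, e u = v
      · obtain ⟨u, rfl⟩ := hv
        simpa [e.injective.extend_apply] using space_nonneg f u
      · rw [Function.extend_apply' _ _ _ hv]; rfl)
    (fun f τ hτ => by
      have hτ' : ∀ v ∈ τ, ∃ u, e u = v := fun v hv => by
        by_contra hcon
        exact hτ v hv (by rw [Function.extend_apply' _ _ _ hcon]; rfl)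
      have hmap : (τ.preimage e e.injective.injOn).map e = τ := by
        ext v
        simp only [Finset.mem_map, Finset.mem_preimage]
        constructor
        · rintro ⟨u, hu, rfl⟩; exact hu
        · intro hv
          obtain ⟨u, rfl⟩ := hτ' v hv
          exact ⟨u, hv, rfl⟩
      rw [← hmap, ← h]
      refine faces_of_subset_support f fun u hu => ?_
      simpa [e.injective.extend_apply] using hτ (e u) (by simpa using hu))
  refine ⟨a, b, ?_, ?_⟩
  · convert ContinuousMap.Homotopic.refl _
    ext f
    refine space_ext fun v => ?_
    by_cases hv : v ∈ Set.range e
    · obtain ⟨u, rfl⟩ := hv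
      simp [a, b, e.injective.extend_apply]
    · simp only [ContinuousMap.comp_apply, ContinuousMap.id_apply, b, mkMap_apply]
      rw [Function.extend_apply' _ _ _ (by simpa using hv), hzero f v hv]; rfl
  · convert ContinuousMap.Homotopic.refl _
    ext f
    refine space_ext fun v => ?_
    simp [a, b, e.injective.extend_apply]

end Space

/-- The join of two simplicial complexes. -/
def join {V W : Type} (K : Cplx V) (M : Cplx W) : Cplx (V ⊕ W) where
  faces τ := K.faces τ.toLeft ∧ M.faces τ.toRight
  down_closed := fun _ _ h hτ =>
    ⟨K.down_closed (Finset.toLeft_subset_toLeft h) hτ.1,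
      M.down_closed (Finset.toRight_subset_toRight h) hτ.2⟩

/-- Two complexes are join equivalent if their joins with any third complex are homotopy
equivalent. -/
def JoinEquiv {V V' : Type} [Fintype V] [Fintype V'] (K : Cplx V) (L : Cplx V') : Prop :=
  ∀ (W : Type) [Fintype W] (M : Cplx W),
    Nonempty (ContinuousMap.HomotopyEquiv (K.join M).space (L.join M).space)

namespace JoinEquiv

variable {V V' V'' W : Type} [Fintype V] [Fintype V'] [Fintype V''] [Fintype W]

theorem symm {K : Cplx V} {L : Cplx V'} (h : JoinEquiv K L) : JoinEquiv L K :=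
  fun W _ M => (h W M).map ContinuousMap.HomotopyEquiv.symm

theorem trans {K : Cplx V} {L : Cplx V'} {P : Cplx V''} (h : JoinEquiv K L)
    (h' : JoinEquiv L P) : JoinEquiv K P :=
  fun W _ M => (h W M).elim fun a => (h' W M).map a.trans

theorem of_embedding {K : Cplx V} {L : Cplx V'} (e : V' ↪ V)
    (h : ∀ τ, L.faces τ ↔ K.faces (τ.map e))
    (hr : ∀ τ, K.faces τ → ∀ v ∈ τ, v ∈ Set.range e) : JoinEquiv K L := by
  intro W _ M
  refine homotopyEquiv_of_embedding (e.sumMap (Function.Embedding.refl W)) (fun τ => ?_) ?_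
  · have hl : (τ.map (e.sumMap (Function.Embedding.refl W))).toLeft = τ.toLeft.map e := by
      ext v; simp
    have hr' : (τ.map (e.sumMap (Function.Embedding.refl W))).toRight = τ.toRight := by
      ext v; simp
    simp only [join, hl, hr', h]
  · rintro τ hτ (v | v) hv
    · obtain ⟨u, rfl⟩ := hr _ hτ.1 v (by simpa using hv)
      exact ⟨Sum.inl u, rfl⟩
    · exact ⟨Sum.inr v, rfl⟩

theorem of_equiv {K : Cplx V} {L : Cplx V'} (e : V' ≃ V)
    (h : ∀ τ, L.faces τ ↔ K.faces (τ.map e.toEmbedding)) : JoinEquiv K L :=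
  of_embedding e.toEmbedding h fun _ _ v _ => e.surjective v

theorem refl (K : Cplx V) : JoinEquiv K K := of_equiv (Equiv.refl V) (by simp)

theorem collapse [DecidableEq V] {K L : Cplx V} (σ : Finset V) (w : V)
    (hσ : σ.Nonempty) (hw : w ∉ σ) (hL : ∀ τ, L.faces τ ↔ K.faces τ ∧ ¬ σ ⊆ τ)
    (hap : ∀ τ, K.faces τ → σ ⊆ τ → K.faces (insert w τ)) : JoinEquiv K L := by
  classical
  intro W _ M
  have hsub : ∀ τ : Finset (V ⊕ W), σ.map Function.Embedding.inl ⊆ τ ↔ σ ⊆ τ.toLeft := by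
    intro τ
    simp [Finset.subset_iff]
  refine homotopyEquiv_of_collapse (σ.map Function.Embedding.inl) (Sum.inl w) (by simpa using hσ)
    (by simpa using hw) (fun τ => ?_) fun τ hτ hστ => ?_
  · simp only [join, hL, hsub]
    tauto
  · have hl : (insert (Sum.inl w) τ).toLeft = insert w τ.toLeft := by ext v; simp
    have hr : (insert (Sum.inl w) τ).toRight = τ.toRight := by ext v; simp
    simp only [join, hl, hr]
    exact ⟨hap _ hτ.1 ((hsub τ).1 hστ), hτ.2⟩

theorem join_assoc (K : Cplx V) (L : Cplx V') (P : Cplx V'') :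
    JoinEquiv ((K.join L).join P) (K.join (L.join P)) := by
  refine of_equiv (Equiv.sumAssoc V V' V'').symm fun τ => ?_
  have h1 : (τ.map (Equiv.sumAssoc V V' V'').symm.toEmbedding).toLeft.toLeft = τ.toLeft := by
    ext v; simp
  have h2 : (τ.map (Equiv.sumAssoc V V' V'').symm.toEmbedding).toLeft.toRight =
      τ.toRight.toLeft := by
    ext v; simp
  have h3 : (τ.map (Equiv.sumAssoc V V' V'').symm.toEmbedding).toRight = τ.toRight.toRight := by
    ext v; simp
  simp only [join, h1, h2, h3, and_assoc]

theorem join_comm (K : Cplx V) (L : Cplx V') : JoinEquiv (K.join L) (L.join K) := by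
  refine of_equiv (Equiv.sumComm V' V) fun τ => ?_
  have h1 : (τ.map (Equiv.sumComm V' V).toEmbedding).toLeft = τ.toRight := by ext v; simp
  have h2 : (τ.map (Equiv.sumComm V' V).toEmbedding).toRight = τ.toLeft := by ext v; simp
  simp only [join, h1, h2, and_comm]

/-- The complex without vertices is a unit for the join. -/
theorem join_of_isEmpty [IsEmpty V'] (K : Cplx V) (L : Cplx V') (hL : L.faces ∅) :
    JoinEquiv (K.join L) K := by
  refine of_embedding Function.Embedding.inl (fun τ => ?_) ?_
  · have h1 : (τ.map (Function.Embedding.inl (β := V'))).toLeft = τ := by ext v; simp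
    have h2 : (τ.map (Function.Embedding.inl (β := V'))).toRight = ∅ := by
      ext v; exact isEmptyElim v
    simp [join, h1, h2, hL]
  · rintro τ - (v | v) -
    · exact ⟨v, rfl⟩
    · exact isEmptyElim v

theorem homotopyEquiv {K : Cplx V} {L : Cplx V'} (h : JoinEquiv K L) :
    Nonempty (ContinuousMap.HomotopyEquiv K.space L.space) := by
  let U : Cplx Empty := ⟨fun _ => True, fun _ _ _ _ => trivial⟩
  have key : ∀ {X : Type} [Fintype X] (P : Cplx X),
      Nonempty (ContinuousMap.HomotopyEquiv (P.join U).space P.space) := by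
    intro X _ P
    refine homotopyEquiv_of_embedding Function.Embedding.inl (fun τ => ?_) ?_
    · have h1 : (τ.map (Function.Embedding.inl (β := Empty))).toLeft = τ := by ext v; simp
      simp [join, h1, U]
    · rintro τ - (v | v) -
      · exact ⟨v, rfl⟩
      · exact isEmptyElim v
  obtain ⟨a⟩ := key K
  obtain ⟨b⟩ := h Empty U
  obtain ⟨c⟩ := key L
  exact ⟨(a.symm.trans b).trans c⟩

theorem join_right {K : Cplx V} {L : Cplx V'} (h : JoinEquiv K L) (M : Cplx W) :
    JoinEquiv (K.join M) (L.join M) := by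
  intro X _ N
  obtain ⟨a⟩ := (join_assoc K M N).homotopyEquiv
  obtain ⟨b⟩ := h _ (M.join N)
  obtain ⟨c⟩ := (join_assoc L M N).homotopyEquiv
  exact ⟨(a.trans b).trans c.symm⟩

theorem join_left {K : Cplx V} {L : Cplx V'} (h : JoinEquiv K L) (M : Cplx W) :
    JoinEquiv (M.join K) (M.join L) :=
  (join_comm M K).trans ((h.join_right M).trans (join_comm L M))

end JoinEquiv

/-- The boundary of the cross-polytope with axes indexed by `ι`. -/
def cross (ι : Type) : Cplx (ι × Bool) where
  faces τ := ∀ i, ¬ ((i, true) ∈ τ ∧ (i, false) ∈ τ)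
  down_closed := fun _ _ h hτ i hi => hτ i ⟨h hi.1, h hi.2⟩

/-- The complex of `n` isolated points. -/
def points (n : ℕ) : Cplx (Fin n) where
  faces τ := ∀ i ∈ τ, ∀ j ∈ τ, i = j
  down_closed := fun _ _ h hτ i hi j hj => hτ i (h hi) j (h hj)

/-- The complex of all sets satisfying `Q` and containing no member of the list `E`. -/
def avoid {V : Type} (Q : Cplx V) (E : List (Finset V)) : Cplx V where
  faces τ := Q.faces τ ∧ ∀ e ∈ E, ¬ e ⊆ τ
  down_closed := fun _ _ h hτ =>
    ⟨Q.down_closed h hτ.1, fun e he hs => hτ.2 e he (hs.trans h)⟩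

/-- The full simplex on a vertex set. -/
def simplex (V : Type) : Cplx V := ⟨fun _ => True, fun _ _ _ h => h⟩

namespace JoinEquiv

variable {V : Type} [Fintype V]

theorem cross_sum (ι κ : Type) [Fintype ι] [Fintype κ] :
    JoinEquiv ((cross ι).join (cross κ)) (cross (ι ⊕ κ)) := by
  refine of_equiv (Equiv.sumProdDistrib ι κ Bool) fun τ => ?_
  have h1 : ∀ i b, (i, b) ∈ (τ.map (Equiv.sumProdDistrib ι κ Bool).toEmbedding).toLeft ↔
      (Sum.inl i, b) ∈ τ := by
    intro i b; simp
  have h2 : ∀ i b, (i, b) ∈ (τ.map (Equiv.sumProdDistrib ι κ Bool).toEmbedding).toRight ↔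
      (Sum.inr i, b) ∈ τ := by
    intro i b; simp
  simp only [join, cross, h1, h2, Sum.forall]

theorem cross_congr {ι κ : Type} [Fintype ι] [Fintype κ] (e : κ ≃ ι) :
    JoinEquiv (cross ι) (cross κ) := by
  refine of_equiv (e.prodCongr (Equiv.refl Bool)) fun τ => ?_
  have h1 : ∀ i b, (e i, b) ∈ τ.map (e.prodCongr (Equiv.refl Bool)).toEmbedding ↔
      (i, b) ∈ τ := by
    intro i b; simp
  simp only [cross, e.surjective.forall, h1]

theorem cross_add (a b : ℕ) :
    JoinEquiv ((cross (Fin a)).join (cross (Fin b))) (cross (Fin (a + b))) :=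
  (cross_sum _ _).trans (cross_congr finSumFinEquiv.symm)

/-- In a complex of sets avoiding the members of `E`, the set `σ` can be added to `E` if some
vertex `w` outside `σ` can be added to every face containing `σ`. -/
theorem avoid_cons [DecidableEq V] {Q : Cplx V} {E : List (Finset V)} (σ : Finset V) (w : V)
    (hσ : σ.Nonempty) (hw : w ∉ σ) (hQ : ∀ τ, Q.faces τ → Q.faces (insert w τ))
    (hap : ∀ e ∈ E, w ∈ e → ∃ e' ∈ E, e' ⊆ σ ∪ e.erase w) :
    JoinEquiv (avoid Q E) (avoid Q (σ :: E)) := by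
  refine collapse σ w hσ hw (fun τ => ?_) fun τ hτ hστ => ⟨hQ _ hτ.1, fun e he hsub => ?_⟩
  · simp only [avoid, List.forall_mem_cons]
    tauto
  · by_cases hwe : w ∈ e
    · obtain ⟨e', he', hsub'⟩ := hap e he hwe
      refine hτ.2 e' he' (hsub'.trans (Finset.union_subset hστ ?_))
      intro v hv
      rw [Finset.mem_erase] at hv
      exact Finset.mem_of_mem_insert_of_ne (hsub hv.2) hv.1
    · exact hτ.2 e he ((Finset.subset_insert_iff_of_notMem hwe).1 hsub)

theorem avoid_congr {Q Q' : Cplx V} {E E' : List (Finset V)}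
    (h : ∀ τ, (avoid Q E).faces τ ↔ (avoid Q' E').faces τ) :
    JoinEquiv (avoid Q E) (avoid Q' E') :=
  of_equiv (Equiv.refl V) fun τ => by simpa using (h τ).symm

/-- Two lists of forbidden sets define the same complex if each member of one contains a
member of the other. -/
theorem avoid_of_refine {Q : Cplx V} {E E' : List (Finset V)}
    (h : ∀ e ∈ E, ∃ e' ∈ E', e' ⊆ e) (h' : ∀ e ∈ E', ∃ e' ∈ E, e' ⊆ e) :
    JoinEquiv (avoid Q E) (avoid Q E') := by
  refine avoid_congr fun τ => ⟨fun hτ => ⟨hτ.1, fun e he hs => ?_⟩,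
    fun hτ => ⟨hτ.1, fun e he hs => ?_⟩⟩
  · obtain ⟨e', he', hs'⟩ := h' e he
    exact hτ.2 e' he' (hs'.trans hs)
  · obtain ⟨e', he', hs'⟩ := h e he
    exact hτ.2 e' he' (hs'.trans hs)

/-- Adding `σ` to the forbidden sets of a complex of all sets avoiding the members of `E`, for
a list `E'` that defines the same complex as `σ :: E`. -/
theorem avoid_simplex_add [DecidableEq V] {E : List (Finset V)} (σ : Finset V) (w : V)
    (E' : List (Finset V)) (hσ : σ.Nonempty) (hw : w ∉ σ)
    (hap : ∀ e ∈ E, w ∈ e → ∃ e' ∈ E, e' ⊆ σ ∪ e.erase w)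
    (h : ∀ e ∈ σ :: E, ∃ e' ∈ E', e' ⊆ e) (h' : ∀ e ∈ E', ∃ e' ∈ σ :: E, e' ⊆ e) :
    JoinEquiv (avoid (simplex V) E) (avoid (simplex V) E') :=
  (avoid_cons σ w hσ hw (fun _ h => h) hap).trans (avoid_of_refine h h')

end JoinEquiv

open JoinEquiv

/-- Four consecutive vertices `p, q, r, s` between `a, b` and `c, d` in a cyclic pattern of
forbidden triples can be replaced by two forbidden pairs. -/
theorem joinEquiv_shorten {V : Type} [Fintype V] [DecidableEq V] (Q : Cplx V)
    (a b c d p q r s : V) (hp : ∀ τ, Q.faces τ → Q.faces (insert p τ))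
    (hq : ∀ τ, Q.faces τ → Q.faces (insert q τ)) (hr : ∀ τ, Q.faces τ → Q.faces (insert r τ))
    (hs : ∀ τ, Q.faces τ → Q.faces (insert s τ))
    (hpq : p ≠ q) (hpr : p ≠ r) (hps : p ≠ s) (hqr : q ≠ r) (hqs : q ≠ s) (hrs : r ≠ s)
    (hpE : p ∉ ({a, b, c, d} : Finset V)) (hqE : q ∉ ({a, b, c, d} : Finset V))
    (hrE : r ∉ ({a, b, c, d} : Finset V)) (hsE : s ∉ ({a, b, c, d} : Finset V)) :
    JoinEquiv
      (avoid Q [{a, b, p}, {b, p, q}, {p, q, r}, {q, r, s}, {r, s, c}, {s, c, d}])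
      (avoid Q [{p, q}, {r, s}, {a, b, c}, {b, c, d}]) := by
  simp only [Finset.mem_insert, Finset.mem_singleton, not_or] at hpE hqE hrE hsE
  have add_abc : JoinEquiv
      (avoid Q [{a, b, p}, {b, p, q}, {p, q, r}, {q, r, s}, {r, s, c}, {s, c, d}])
      (avoid Q [{a, b, c}, {a, b, p}, {b, p, q}, {p, q, r}, {q, r, s}, {r, s, c}, {s, c, d}]) := by
    refine avoid_cons _ q (by simp) (by grind) hq ?_
    simp [Finset.subset_iff]
    grind
  have add_bcd : JoinEquiv
      (avoid Q [{a, b, c}, {a, b, p}, {b, p, q}, {p, q, r}, {q, r, s}, {r, s, c}, {s, c, d}])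
      (avoid Q [{b, c, d}, {a, b, c}, {a, b, p}, {b, p, q}, {p, q, r}, {q, r, s}, {r, s, c},
        {s, c, d}]) := by
    refine avoid_cons _ r (by simp) (by grind) hr ?_
    simp [Finset.subset_iff]
    grind
  have reorder_abp : JoinEquiv
      (avoid Q [{b, c, d}, {a, b, c}, {a, b, p}, {b, p, q}, {p, q, r}, {q, r, s}, {r, s, c},
        {s, c, d}])
      (avoid Q [{a, b, p}, {s, c, d}, {b, c, d}, {a, b, c}, {b, p, q}, {p, q, r}, {q, r, s},
        {r, s, c}]) := by
    apply avoid_congr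
    simp only [avoid, List.forall_mem_cons]
    tauto
  have drop_abp : JoinEquiv
      (avoid Q [{s, c, d}, {b, c, d}, {a, b, c}, {b, p, q}, {p, q, r}, {q, r, s}, {r, s, c}])
      (avoid Q [{a, b, p}, {s, c, d}, {b, c, d}, {a, b, c}, {b, p, q}, {p, q, r}, {q, r, s},
        {r, s, c}]) := by
    refine avoid_cons _ r (by simp) (by grind) hr ?_
    simp [Finset.subset_iff]
    grind
  have drop_scd : JoinEquiv
      (avoid Q [{b, c, d}, {a, b, c}, {b, p, q}, {p, q, r}, {q, r, s}, {r, s, c}])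
      (avoid Q [{s, c, d}, {b, c, d}, {a, b, c}, {b, p, q}, {p, q, r}, {q, r, s}, {r, s, c}]) := by
    refine avoid_cons _ q (by simp) (by grind) hq ?_
    simp [Finset.subset_iff]
    grind
  have add_pq : JoinEquiv
      (avoid Q [{b, c, d}, {a, b, c}, {b, p, q}, {p, q, r}, {q, r, s}, {r, s, c}])
      (avoid Q [{p, q}, {b, c, d}, {a, b, c}, {b, p, q}, {p, q, r}, {q, r, s}, {r, s, c}]) := by
    refine avoid_cons _ s (by simp) (by grind) hs ?_
    simp [Finset.subset_iff]
    grind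
  have drop_pq_supersets : JoinEquiv
      (avoid Q [{p, q}, {b, c, d}, {a, b, c}, {b, p, q}, {p, q, r}, {q, r, s}, {r, s, c}])
      (avoid Q [{p, q}, {b, c, d}, {a, b, c}, {q, r, s}, {r, s, c}]) := by
    apply avoid_of_refine <;> simp [Finset.subset_iff]
  have add_rs : JoinEquiv
      (avoid Q [{p, q}, {b, c, d}, {a, b, c}, {q, r, s}, {r, s, c}])
      (avoid Q [{r, s}, {p, q}, {b, c, d}, {a, b, c}, {q, r, s}, {r, s, c}]) := by
    refine avoid_cons _ p (by simp) (by grind) hp ?_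
    simp [Finset.subset_iff]
    grind
  have drop_rs_supersets : JoinEquiv
      (avoid Q [{r, s}, {p, q}, {b, c, d}, {a, b, c}, {q, r, s}, {r, s, c}])
      (avoid Q [{p, q}, {r, s}, {a, b, c}, {b, c, d}]) := by
    apply avoid_of_refine <;> simp [Finset.subset_iff]
  exact add_abc.trans <| add_bcd.trans <| reorder_abp.trans <| drop_abp.symm.trans <|
    drop_scd.symm.trans <| add_pq.trans <| drop_pq_supersets.trans <| add_rs.trans
    drop_rs_supersets

/-- The faces of the dominance complex of a cycle are the sets of vertices without three
cyclically consecutive elements. -/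
theorem domCpx_cycleGraph_faces {n : ℕ} (hn : 2 ≤ n) (τ : Finset (Fin n)) :
    (domCpx (cycleGraph n)).faces τ ↔
      (∀ i (h : i + 2 < n),
        ¬ ((⟨i, by omega⟩ : Fin n) ∈ τ ∧ (⟨i + 1, by omega⟩ : Fin n) ∈ τ ∧ ⟨i + 2, h⟩ ∈ τ)) ∧
      ¬ ((⟨n - 2, by omega⟩ : Fin n) ∈ τ ∧ (⟨n - 1, by omega⟩ : Fin n) ∈ τ ∧
        (⟨0, by omega⟩ : Fin n) ∈ τ) ∧
      ¬ ((⟨n - 1, by omega⟩ : Fin n) ∈ τ ∧ (⟨0, by omega⟩ : Fin n) ∈ τ ∧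
        (⟨1, by omega⟩ : Fin n) ∈ τ) := by
  have hsub : ∀ u v : Fin n, (u - v).val = 1 ↔
      u.val = v.val + 1 ∨ (v.val = n - 1 ∧ u.val = 0) := by
    intro u v
    have hu := u.2
    have hv := v.2
    rw [Fin.sub_def]
    simp only
    by_cases h : v.val ≤ u.val
    · rw [show n - v.val + u.val = n + (u.val - v.val) by omega, Nat.add_mod_left,
        Nat.mod_eq_of_lt (by omega)]
      omega
    · rw [Nat.mod_eq_of_lt (by omega)]
      omega
  have hadj : ∀ u v : Fin n, (cycleGraph n).Adj u v ↔
      u.val = v.val + 1 ∨ (v.val = n - 1 ∧ u.val = 0) ∨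
      v.val = u.val + 1 ∨ (u.val = n - 1 ∧ v.val = 0) := by
    intro u v
    rw [cycleGraph_adj', hsub, hsub, or_assoc]
  have hface : (domCpx (cycleGraph n)).faces τ ↔
      ∀ v : Fin n, ∃ w, w ∉ τ ∧ (w = v ∨ w.val = v.val + 1 ∨ (v.val = n - 1 ∧ w.val = 0) ∨
      v.val = w.val + 1 ∨ (w.val = n - 1 ∧ v.val = 0)) := by
    simp only [domCpx, hadj]
  rw [hface]
  constructor
  · intro h
    refine ⟨fun i hi hmem => ?_, fun hmem => ?_, fun hmem => ?_⟩
    · obtain ⟨w, hw, hvw⟩ := h ⟨i + 1, by omega⟩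
      grind
    · obtain ⟨w, hw, hvw⟩ := h ⟨n - 1, by omega⟩
      grind
    · obtain ⟨w, hw, hvw⟩ := h ⟨0, by omega⟩
      grind
  · rintro ⟨h1, h2, h3⟩ v
    by_contra! hcon
    by_cases hv0 : v.val = 0
    · refine h3 ⟨?_, ?_, ?_⟩ <;> by_contra hmem <;> have := hcon _ hmem <;> grind
    by_cases hv1 : v.val = n - 1
    · refine h2 ⟨?_, ?_, ?_⟩ <;> by_contra hmem <;> have := hcon _ hmem <;> grind
    · have hv := v.2
      refine h1 (v.val - 1) (by omega) ⟨?_, ?_, ?_⟩ <;> by_contra hmem <;>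
        have := hcon _ hmem <;> grind

open JoinEquiv

/-- The complex of all subsets of `Fin (m + 4)` without three consecutive elements below `m`. -/
def pathTriples (m : ℕ) : Cplx (Fin (m + 4)) where
  faces τ := ∀ i (h : i + 2 < m), ¬ ((⟨i, by omega⟩ : Fin (m + 4)) ∈ τ ∧
    (⟨i + 1, by omega⟩ : Fin (m + 4)) ∈ τ ∧ (⟨i + 2, by omega⟩ : Fin (m + 4)) ∈ τ)
  down_closed := fun _ _ h hτ i hi hmem => hτ i hi ⟨h hmem.1, h hmem.2.1, h hmem.2.2⟩

theorem pathTriples_insert {m : ℕ} (v : Fin (m + 4)) (hv : m ≤ v.val) (τ : Finset (Fin (m + 4)))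
    (h : (pathTriples m).faces τ) : (pathTriples m).faces (insert v τ) := by
  intro i hi hmem
  have := h i hi
  simp only [Finset.mem_insert, Fin.ext_iff] at hmem
  grind

/-- The vertices of `Fin m` together with two antipodal pairs, as the elements of `Fin (m + 4)`. -/
def appendPairs (m : ℕ) : Fin m ⊕ (Fin 2 × Bool) ≃ Fin (m + 4) :=
  (Equiv.sumCongr (Equiv.refl (Fin m))
    ((Equiv.prodCongr (Equiv.refl (Fin 2)) (finTwoEquiv.symm.trans Fin.revPerm)).trans
      finProdFinEquiv)).trans finSumFinEquiv

theorem joinEquiv_cycle_add_four {m : ℕ} (hm : 2 ≤ m) :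
    JoinEquiv (domCpx (cycleGraph (m + 4))) ((domCpx (cycleGraph m)).join (cross (Fin 2))) := by
  have h1 : JoinEquiv (domCpx (cycleGraph (m + 4))) (avoid (pathTriples m)
      [{⟨m - 2, by omega⟩, ⟨m - 1, by omega⟩, ⟨m, by omega⟩},
        {⟨m - 1, by omega⟩, ⟨m, by omega⟩, ⟨m + 1, by omega⟩},
        {⟨m, by omega⟩, ⟨m + 1, by omega⟩, ⟨m + 2, by omega⟩},
        {⟨m + 1, by omega⟩, ⟨m + 2, by omega⟩, ⟨m + 3, by omega⟩},
        {⟨m + 2, by omega⟩, ⟨m + 3, by omega⟩, ⟨0, by omega⟩},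
        {⟨m + 3, by omega⟩, ⟨0, by omega⟩, ⟨1, by omega⟩}]) := by
    refine of_equiv (Equiv.refl _) fun τ => ?_
    rw [Equiv.refl_toEmbedding, Finset.map_refl, domCpx_cycleGraph_faces (by omega)]
    simp only [avoid, List.forall_mem_cons, Finset.insert_subset_iff, Finset.singleton_subset_iff,
      List.not_mem_nil, false_implies, implies_true, and_true, pathTriples]
    constructor
    · rintro ⟨hQ, ha, hb, hc, hd, he, hf⟩
      refine ⟨fun i hi hmem => ?_, he, hf⟩
      obtain h | h | h | h | h : i + 2 < m ∨ i = m - 2 ∨ i = m - 1 ∨ i = m ∨ i = m + 1 := by omega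
      · exact hQ i h hmem
      · subst h
        exact ha (by convert hmem using 3 <;> simp <;> omega)
      · subst h
        exact hb (by convert hmem using 3 <;> simp <;> omega)
      · subst h
        exact hc hmem
      · subst h
        exact hd hmem
    · rintro ⟨hQ, he, hf⟩
      refine ⟨fun i hi => hQ i (by omega), ?_, ?_, hQ m (by omega), hQ (m + 1) (by omega), he, hf⟩
      · have := hQ (m - 2) (by omega)
        convert this using 4 <;> simp <;> omega
      · have := hQ (m - 1) (by omega)
        convert this using 4 <;> simp <;> omega
  refine h1.trans ((joinEquiv_shorten _ _ _ _ _ _ _ _ _ ?_ ?_ ?_ ?_ ?_ ?_ ?_ ?_ ?_ ?_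
    ?_ ?_ ?_ ?_).trans ?_)
  iterate 4 exact pathTriples_insert _ (by simp)
  iterate 6 simp [Fin.ext_iff]
  iterate 4 (simp [Fin.ext_iff]; omega)
  refine of_equiv (appendPairs m) fun τ => ?_
  have hl : ∀ (i : ℕ) (h : i < m), (⟨i, by omega⟩ : Fin (m + 4)) ∈
      τ.map (appendPairs m).toEmbedding ↔ ⟨i, h⟩ ∈ τ.toLeft := by
    intro i h
    rw [Finset.mem_map_equiv, Finset.mem_toLeft, (Equiv.symm_apply_eq _).2]
    rfl
  have hr : ∀ (i : Fin 2) (b : Bool), (appendPairs m (Sum.inr (i, b))) ∈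
      τ.map (appendPairs m).toEmbedding ↔ (i, b) ∈ τ.toRight := by
    intro i b
    simp
  have hp : (⟨m, by omega⟩ : Fin (m + 4)) = appendPairs m (Sum.inr (0, true)) := rfl
  have hq : (⟨m + 1, by omega⟩ : Fin (m + 4)) = appendPairs m (Sum.inr (0, false)) := rfl
  have hr' : (⟨m + 2, by omega⟩ : Fin (m + 4)) = appendPairs m (Sum.inr (1, true)) := rfl
  have hs : (⟨m + 3, by omega⟩ : Fin (m + 4)) = appendPairs m (Sum.inr (1, false)) := rfl
  simp only [join, domCpx_cycleGraph_faces hm, avoid, List.forall_mem_cons,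
    Finset.insert_subset_iff, Finset.singleton_subset_iff, List.not_mem_nil, false_implies,
    implies_true, and_true, pathTriples, hp, hq, hr', hs, hr, cross, Fin.forall_fin_two]
  rw [hl (m - 2) (by omega), hl (m - 1) (by omega), hl 0 (by omega), hl 1 (by omega)]
  have hpath : (∀ i (h : i + 2 < m), ¬ ((⟨i, by omega⟩ : Fin (m + 4)) ∈
        τ.map (appendPairs m).toEmbedding ∧ (⟨i + 1, by omega⟩ : Fin (m + 4)) ∈
        τ.map (appendPairs m).toEmbedding ∧ (⟨i + 2, by omega⟩ : Fin (m + 4)) ∈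
        τ.map (appendPairs m).toEmbedding)) ↔
      ∀ i (h : i + 2 < m), ¬ ((⟨i, by omega⟩ : Fin m) ∈ τ.toLeft ∧
        (⟨i + 1, by omega⟩ : Fin m) ∈ τ.toLeft ∧ ⟨i + 2, h⟩ ∈ τ.toLeft) := by
    refine forall₂_congr fun i h => ?_
    rw [hl i (by omega), hl (i + 1) (by omega), hl (i + 2) (by omega)]
  rw [hpath]
  tauto

theorem joinEquiv_cycle_five :
    JoinEquiv (domCpx (cycleGraph (1 + 4)))
      ((domCpx (cycleGraph 1)).join (cross (Fin 2))) := by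
  have forbidden : JoinEquiv (domCpx (cycleGraph 5)) (avoid (simplex (Fin 5))
      [{0, 1, 2}, {1, 2, 3}, {2, 3, 4}, {3, 4, 0}, {4, 0, 1}]) := by
    refine of_equiv (Equiv.refl _) fun τ => ?_
    rw [Equiv.refl_toEmbedding, Finset.map_refl]
    revert τ
    simp only [avoid, simplex, domCpx, true_and]
    decide
  have add_last_first := avoid_simplex_add (V := Fin 5)
    (E := [{0, 1, 2}, {1, 2, 3}, {2, 3, 4}, {3, 4, 0}, {4, 0, 1}]) {4, 0} 2
    [{4, 0}, {0, 1, 2}, {1, 2, 3}, {2, 3, 4}]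
    (by simp) (by simp) (by decide) (by decide) (by decide)
  have add_first_second := avoid_simplex_add (V := Fin 5)
    (E := [{4, 0}, {0, 1, 2}, {1, 2, 3}, {2, 3, 4}]) {0, 1} 3
    [{0, 1}, {4, 0}, {1, 2, 3}, {2, 3, 4}]
    (by simp) (by simp) (by decide) (by decide) (by decide)
  have add_second_third := avoid_simplex_add (V := Fin 5)
    (E := [{0, 1}, {4, 0}, {1, 2, 3}, {2, 3, 4}]) {1, 2} 4
    [{1, 2}, {0, 1}, {4, 0}, {2, 3, 4}]
    (by simp) (by simp) (by decide) (by decide) (by decide)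
  have add_fourth_last := avoid_simplex_add (V := Fin 5)
    (E := [{1, 2}, {0, 1}, {4, 0}, {2, 3, 4}]) {3, 4} 1
    [{3, 4}, {1, 2}, {0, 1}, {4, 0}]
    (by simp) (by simp) (by decide) (by decide) (by decide)
  have delete_first := avoid_simplex_add (V := Fin 5) (E := [{3, 4}, {1, 2}, {0, 1}, {4, 0}]) {0} 2
    [{0}, {3, 4}, {1, 2}]
    (by simp) (by simp) (by decide) (by decide) (by decide)
  refine forbidden.trans <| add_last_first.trans <| add_first_second.trans <|
    add_second_third.trans <|
    add_fourth_last.trans <| delete_first.trans ?_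
  refine of_equiv (appendPairs 1) ?_
  simp only [avoid, simplex, join, domCpx, cross, true_and]
  decide

theorem joinEquiv_cycle_one : JoinEquiv (domCpx (cycleGraph 1)) (cross (Fin 0)) := by
  refine of_embedding ⟨fun x => x.1.elim0, fun x => x.1.elim0⟩ (fun τ => ?_) fun τ hτ v hv => ?_
  · have hτ : τ = ∅ := Subsingleton.elim _ _
    simp [hτ, cross, domCpx]
  · obtain ⟨w, hw, -⟩ := hτ v
    exact absurd (Subsingleton.elim v w ▸ hv) hw

theorem joinEquiv_cycle_two : JoinEquiv (domCpx (cycleGraph 2)) (cross (Fin 1)) := by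
  refine of_equiv ((Equiv.uniqueProd Bool (Fin 1)).trans finTwoEquiv.symm) ?_
  simp only [domCpx, cross]
  decide

theorem joinEquiv_cycle_three : JoinEquiv (domCpx (cycleGraph 3)) (cross (Fin 2)) := by
  have of_cycle : JoinEquiv (avoid (simplex (Fin 4)) [{3}, {0, 1, 2}])
      (domCpx (cycleGraph 3)) := by
    refine of_embedding Fin.castSuccEmb ?_ ?_
    · simp only [avoid, simplex, domCpx, true_and]
      decide
    · simp only [avoid, simplex, true_and, Set.mem_range]
      decide
  have delete_vertex := avoid_simplex_add (V := Fin 4) (E := [{0, 3}, {0, 1, 2}]) {3} 1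
    [{3}, {0, 1, 2}]
    (by simp) (by simp) (by decide) (by decide) (by decide)
  have add_pair := avoid_simplex_add (V := Fin 4) (E := [{0, 3}, {0, 1, 2}]) {1, 2} 3
    [{0, 3}, {1, 2}]
    (by simp) (by simp) (by decide) (by decide) (by decide)
  refine of_cycle.symm.trans <| delete_vertex.symm.trans <| add_pair.trans ?_
  refine of_embedding ⟨fun x => if x.1 = 0 then (if x.2 then 1 else 2) else if x.2 then 0 else 3,
    by decide⟩ ?_ ?_
  · simp only [avoid, simplex, cross, true_and]
    decide
  · simp only [avoid, simplex, true_and, Set.mem_range]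
    decide

theorem joinEquiv_cycle_four :
    JoinEquiv (domCpx (cycleGraph 4)) ((points 4).join (cross (Fin 1))) := by
  have of_cycle : JoinEquiv (avoid (simplex (Fin 6))
      [{4}, {5}, {0, 1, 2}, {0, 1, 3}, {0, 2, 3}, {1, 2, 3}]) (domCpx (cycleGraph 4)) := by
    refine of_embedding (Fin.castLEEmb (by norm_num)) ?_ ?_
    · simp only [avoid, simplex, domCpx, true_and]
      decide
    · intro τ hτ v hv
      have h4 : v ≠ 4 := fun h => hτ.2 {4} (by simp) (by simpa [h] using hv)
      have h5 : v ≠ 5 := fun h => hτ.2 {5} (by simp) (by simpa [h] using hv)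
      clear hτ hv
      revert v
      simp only [Set.mem_range]
      decide
  have delete_five := avoid_simplex_add (V := Fin 6) (E :=
      [{4}, {0, 5}, {0, 1, 2}, {0, 1, 3}, {0, 2, 3}, {1, 2, 3}, {1, 3, 5}]) {5} 2
    [{4}, {5}, {0, 1, 2}, {0, 1, 3}, {0, 2, 3}, {1, 2, 3}]
    (by simp) (by simp) (by decide) (by decide) (by decide)
  have add_one_two := avoid_simplex_add (V := Fin 6) (E :=
      [{4}, {0, 5}, {0, 1, 2}, {0, 1, 3}, {0, 2, 3}, {1, 2, 3}, {1, 3, 5}]) {1, 2} 5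
    [{4}, {0, 5}, {1, 2}, {0, 1, 3}, {0, 2, 3}, {1, 3, 5}]
    (by simp) (by simp) (by decide) (by decide) (by decide)
  have add_two_three := avoid_simplex_add (V := Fin 6) (E :=
      [{4}, {0, 5}, {1, 2}, {0, 1, 3}, {0, 2, 3}, {1, 3, 5}]) {2, 3} 5
    [{4}, {0, 5}, {1, 2}, {2, 3}, {0, 1, 3}, {1, 3, 5}]
    (by simp) (by simp) (by decide) (by decide) (by decide)
  have delete_four := avoid_simplex_add (V := Fin 6) (E :=
      [{0, 5}, {1, 2}, {2, 3}, {2, 4}, {4, 5}, {0, 1, 3}, {0, 3, 4}, {1, 3, 5}]) {4} 1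
    [{4}, {0, 5}, {1, 2}, {2, 3}, {0, 1, 3}, {1, 3, 5}]
    (by simp) (by simp) (by decide) (by decide) (by decide)
  have add_one_three := avoid_simplex_add (V := Fin 6) (E :=
      [{0, 5}, {1, 2}, {2, 3}, {2, 4}, {4, 5}, {0, 1, 3}, {0, 3, 4}, {1, 3, 5}]) {1, 3} 4
    [{0, 5}, {1, 2}, {1, 3}, {2, 3}, {2, 4}, {4, 5}, {0, 3, 4}]
    (by simp) (by simp) (by decide) (by decide) (by decide)
  have add_one_four := avoid_simplex_add (V := Fin 6) (E :=
      [{0, 5}, {1, 2}, {1, 3}, {2, 3}, {2, 4}, {4, 5}, {0, 3, 4}]) {1, 4} 0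
    [{0, 5}, {1, 2}, {1, 3}, {1, 4}, {2, 3}, {2, 4}, {4, 5}, {0, 3, 4}]
    (by simp) (by simp) (by decide) (by decide) (by decide)
  have add_four_five := avoid_simplex_add (V := Fin 6) (E :=
      [{0, 5}, {1, 2}, {1, 3}, {1, 4}, {2, 3}, {2, 4}, {0, 3, 4}]) {4, 5} 3
    [{0, 5}, {1, 2}, {1, 3}, {1, 4}, {2, 3}, {2, 4}, {4, 5}, {0, 3, 4}]
    (by simp) (by simp) (by decide) (by decide) (by decide)
  have add_three_four := avoid_simplex_add (V := Fin 6) (E :=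
      [{0, 5}, {1, 2}, {1, 3}, {1, 4}, {2, 3}, {2, 4}, {0, 3, 4}]) {3, 4} 5
    [{0, 5}, {1, 2}, {1, 3}, {1, 4}, {2, 3}, {2, 4}, {3, 4}]
    (by simp) (by simp) (by decide) (by decide) (by decide)
  refine of_cycle.symm.trans <| delete_five.symm.trans <| add_one_two.trans <|
    add_two_three.trans <| delete_four.symm.trans <| add_one_three.trans <|
    add_one_four.trans <| add_four_five.symm.trans <| add_three_four.trans ?_
  refine of_embedding ⟨Sum.elim (fun i => ⟨i.val + 1, by omega⟩) fun x => if x.2 then 0 else 5,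
    by decide⟩ ?_ ?_
  · simp only [avoid, simplex, join, points, cross, true_and]
    decide
  · intro τ hτ v hv
    clear hτ hv
    revert v
    simp only [Set.mem_range]
    decide

theorem joinEquiv_cycle_add_four_mul {m : ℕ} (hm : 1 ≤ m) (k : ℕ) :
    JoinEquiv (domCpx (cycleGraph (4 * k + m)))
      ((domCpx (cycleGraph m)).join (cross (Fin (2 * k)))) := by
  induction k with
  | zero =>
    rw [show 4 * 0 + m = m by omega, mul_zero]
    exact (join_of_isEmpty _ (cross (Fin 0)) fun i => i.elim0).symm
  | succ k ih =>
    rw [show 4 * (k + 1) + m = 4 * k + m + 4 by omega]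
    have shorten : JoinEquiv (domCpx (cycleGraph (4 * k + m + 4)))
        ((domCpx (cycleGraph (4 * k + m))).join (cross (Fin 2))) := by
      by_cases h : 2 ≤ 4 * k + m
      · exact joinEquiv_cycle_add_four h
      · rw [show 4 * k + m = 1 by omega]
        exact joinEquiv_cycle_five
    exact shorten.trans <| (ih.join_right _).trans <| (join_assoc _ _ _).trans <|
      (cross_add (2 * k) 2).join_left _

/-- If `D(C_m)` is equivalent to a sphere, then so is `D(C_(4k+m))`. -/
theorem joinEquiv_cycle_cross {m a : ℕ} (hm : 1 ≤ m)
    (h : JoinEquiv (domCpx (cycleGraph m)) (cross (Fin a))) (k : ℕ) :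
    JoinEquiv (domCpx (cycleGraph (4 * k + m))) (cross (Fin (a + 2 * k))) :=
  (joinEquiv_cycle_add_four_mul hm k).trans <| (h.join_right _).trans <| cross_add a (2 * k)

theorem joinEquiv_cycle_points (k : ℕ) :
    JoinEquiv (domCpx (cycleGraph (4 * k + 4)))
      ((points 4).join (cross (Fin (1 + 2 * k)))) :=
  (joinEquiv_cycle_add_four_mul (by norm_num) k).trans <|
    (joinEquiv_cycle_four.join_right _).trans <| (join_assoc _ _ _).trans <|
    (cross_add 1 (2 * k)).join_left _

/-- The positive and negative parts of the coordinates of a vector add up to its `ℓ¹` norm. -/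
theorem sum_pos_neg_parts {d : ℕ} (x : Fin d → ℝ) :
    ∑ p : Fin d × Bool, max (if p.2 then x p.1 else -x p.1) 0 = ∑ i, |x i| := by
  rw [Fintype.sum_prod_type]
  refine Finset.sum_congr rfl fun i _ => ?_
  simp [posPart_add_negPart, ← posPart_def]

theorem pos_of_ne_zero {d : ℕ} {x : Fin d → ℝ} (hx : x ≠ 0) : 0 < ∑ i, |x i| := by
  obtain ⟨i, hi⟩ := Function.ne_iff.1 hx
  exact Finset.sum_pos' (fun _ _ => abs_nonneg _) ⟨i, Finset.mem_univ i, abs_pos.2 hi⟩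

/-- The radial projection onto the unit sphere. -/
noncomputable def toSphere {d : ℕ} {X : Type*} [TopologicalSpace X] (g : X → Fin d → ℝ)
    (hg : ∀ i, Continuous fun x => g x i) (h0 : ∀ x, g x ≠ 0) :
    C(X, Metric.sphere (0 : EuclideanSpace ℝ (Fin d)) 1) where
  toFun x := ⟨‖WithLp.toLp 2 (g x)‖⁻¹ • WithLp.toLp 2 (g x), by
    have : ‖WithLp.toLp 2 (g x)‖ ≠ 0 := by simpa using h0 x
    simp [norm_smul, this]⟩
  continuous_toFun := by
    have hc : Continuous fun x => WithLp.toLp 2 (g x) :=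
      (PiLp.continuous_toLp 2 _).comp (continuous_pi hg)
    exact ((hc.norm.inv₀ fun x => by simp [h0]).smul hc).subtype_mk _

/-- Positive scalar multiples have the same radial projection. -/
theorem toSphere_eq {d : ℕ} {X : Type*} [TopologicalSpace X] (g : X → Fin d → ℝ) (hg h0) (x : X)
    (y : Metric.sphere (0 : EuclideanSpace ℝ (Fin d)) 1) (c : ℝ) (hc : 0 < c)
    (h : ∀ i, g x i = c * y.1 i) : toSphere g hg h0 x = y := by
  have hy : ‖y.1‖ = 1 := by simp
  have hgx : WithLp.toLp 2 (g x) = c • y.1 := by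
    ext i
    simp [h]
  apply Subtype.ext
  simp only [toSphere, ContinuousMap.coe_mk, hgx, norm_smul, hy, Real.norm_eq_abs, abs_of_pos hc,
    mul_one, smul_smul, inv_mul_cancel₀ hc.ne', one_smul]

theorem toSphere_apply {d : ℕ} {X : Type*} [TopologicalSpace X] (g : X → Fin d → ℝ) (hg h0)
    (x : X) : ∃ c : ℝ, 0 < c ∧ ∀ i, (toSphere g hg h0 x).1 i = c * g x i :=
  ⟨‖WithLp.toLp 2 (g x)‖⁻¹, by simpa using h0 x, fun i => by simp [toSphere]⟩

theorem sphere_ne_zero {d : ℕ} (x : Metric.sphere (0 : EuclideanSpace ℝ (Fin d)) 1) :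
    (fun i => x.1 i) ≠ 0 := by
  intro h
  have : x.1 = 0 := by ext i; exact congrFun h i
  simpa [this] using x.2

@[fun_prop]
theorem continuous_sphere_coord {d : ℕ} (i : Fin d) :
    Continuous fun x : Metric.sphere (0 : EuclideanSpace ℝ (Fin d)) 1 => x.1 i := by
  fun_prop

theorem cross_space_disjoint {d : ℕ} (f : (cross (Fin d)).space) (i : Fin d) :
    f.coord (i, true) = 0 ∨ f.coord (i, false) = 0 := by
  by_contra! h
  exact faces_of_subset_support f (τ := {(i, true), (i, false)}) (by simpa using h) i (by simp)

theorem homotopyEquiv_cross_sphere (d : ℕ) :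
    Nonempty (ContinuousMap.HomotopyEquiv (cross (Fin d)).space
      (Metric.sphere (0 : EuclideanSpace ℝ (Fin d)) 1)) := by
  let g : (cross (Fin d)).space → Fin d → ℝ := fun f i => f.coord (i, true) - f.coord (i, false)
  have hg : ∀ i, Continuous fun f => g f i := fun i =>
    (continuous_coord _).sub (continuous_coord _)
  have h0 : ∀ f, g f ≠ 0 := by
    intro f h
    have hz : ∀ p, f.coord p = 0 := by
      rintro ⟨i, b⟩
      have h1 : f.coord (i, true) - f.coord (i, false) = 0 := congrFun h i
      have h2 := cross_space_disjoint f i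
      cases b <;> rcases h2 with h2 | h2 <;> linarith
    have := space_sum f
    simp [hz] at this
  let b : C(Metric.sphere (0 : EuclideanSpace ℝ (Fin d)) 1, (cross (Fin d)).space) :=
    normMap (cross (Fin d)) (fun x p => max (if p.2 then x.1 p.1 else -x.1 p.1) 0)
      (fun p => by cases p.2 <;> simp <;> fun_prop)
      (fun x => by
        rw [sum_pos_neg_parts fun i => x.1 i]
        exact pos_of_ne_zero (sphere_ne_zero x))
      (fun x p => le_max_right _ _)
      (fun x τ hτ i hi => by
        have h1 := hτ _ hi.1
        have h2 := hτ _ hi.2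
        simp only [if_true, Bool.false_eq_true, if_false, ne_eq, max_eq_right_iff, not_le] at h1 h2
        linarith)
  refine ⟨toSphere g hg h0, b, ?_, ?_⟩
  · convert ContinuousMap.Homotopic.refl _
    ext f
    refine space_ext fun p => ?_
    obtain ⟨c, hc, hac⟩ := toSphere_apply g hg h0 f
    have hcoord : ∀ p : Fin d × Bool,
        max (if p.2 then (toSphere g hg h0 f).1 p.1 else -(toSphere g hg h0 f).1 p.1) 0 =
          c * f.coord p := by
      rintro ⟨i, b⟩
      have h1 := space_nonneg f (i, true)
      have h2 := space_nonneg f (i, false)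
      have h3 := mul_nonneg hc.le h1
      have h4 := mul_nonneg hc.le h2
      simp only [hac, g]
      cases b <;> rcases cross_space_disjoint f i with h | h <;> simp [h, h3, h4]
    simp only [ContinuousMap.comp_apply, b, normMap_apply, hcoord, ← Finset.mul_sum, space_sum,
      ContinuousMap.id_apply]
    field_simp
  · convert ContinuousMap.Homotopic.refl _
    ext x : 1
    refine (toSphere_eq g hg h0 (b x) x (∑ i, |x.1 i|)⁻¹
      (inv_pos.2 (pos_of_ne_zero (sphere_ne_zero x))) fun i => ?_).symm
    simp only [g, b, normMap_apply, sum_pos_neg_parts fun i => x.1 i, ← sub_div]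
    have : max (x.1 i) 0 - max (-x.1 i) 0 = x.1 i := posPart_sub_negPart _
    simp [this, div_eq_inv_mul]

section Wedge

variable {d : ℕ}

/-- The inclusion of a sphere into a wedge of three spheres. -/
noncomputable def wedgeIncl (d : ℕ) (j : Fin 3) :
    C(sph d, sphereWedge fun e => if e = d then 3 else 0) where
  toFun x := Quot.mk _ ⟨d, Fin.cast (if_pos rfl).symm j, x⟩
  continuous_toFun := continuous_quot_mk.comp (continuous_sigmaMk.comp (by fun_prop))

theorem wedgeIncl_basePt (d : ℕ) (j l : Fin 3) :
    wedgeIncl d j (basePt d) = wedgeIncl d l (basePt d) :=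
  Quot.sound (Or.inr ⟨rfl, rfl⟩)

theorem exists_wedgeIncl (w : sphereWedge fun e => if e = d then 3 else 0) :
    ∃ j x, w = wedgeIncl d j x := by
  obtain ⟨⟨e, j, x⟩, rfl⟩ := Quot.exists_rep w
  by_cases h : e = d
  · subst h
    exact ⟨Fin.cast (if_pos rfl) j, x, rfl⟩
  · exact (Fin.cast (if_neg h) j).elim0

/-- Maps out of a wedge of three spheres. -/
theorem exists_wedgeDesc {Z : Type*} [TopologicalSpace Z] (F : Fin 3 → C(sph d, Z))
    (hF : ∀ j l, F j (basePt d) = F l (basePt d)) :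
    ∃ G : C(sphereWedge fun e => if e = d then 3 else 0, Z),
      ∀ j x, G (wedgeIncl d j x) = F j x := by
  have hφ : ∀ e, ∃ φ : C(Fin (if e = d then 3 else 0) × sph e, Z), ∀ (h : d = e) (j : Fin 3) x,
      φ (Fin.cast (if_pos h.symm).symm j, h ▸ x) = F j x := by
    intro e
    by_cases h : d = e
    · subst h
      refine ⟨⟨fun p => F (Fin.cast (if_pos rfl) p.1) p.2, ?_⟩, fun _ j x => rfl⟩
      exact continuous_prod_of_discrete_left.2 fun j =>
        (F (Fin.cast (if_pos rfl) j)).continuous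
    · have : IsEmpty (Fin (if e = d then 3 else 0)) := by
        rw [if_neg (Ne.symm h)]; infer_instance
      exact ⟨⟨fun p => isEmptyElim p.1, continuous_iff_continuousAt.2 fun p => isEmptyElim p.1⟩,
        fun h' => absurd h' h⟩
  choose φ hφ using hφ
  have hbase : ∀ e j l, φ e (j, basePt e) = φ d (l, basePt d) := by
    intro e j l
    by_cases h : d = e
    · subst h
      exact (hφ d rfl (Fin.cast (if_pos rfl) j) _).trans
        ((hF _ _).trans (hφ d rfl (Fin.cast (if_pos rfl) l) _).symm)
    · exact (Fin.cast (if_neg (Ne.symm h)) j).elim0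
  refine ⟨⟨Quot.lift (fun p => φ p.1 p.2) ?_, ?_⟩, fun j x => hφ d rfl j x⟩
  · rintro ⟨e, j, x⟩ ⟨e', j', x'⟩ (h | ⟨h, h'⟩)
    · rw [h]
    · dsimp only at h h'
      subst h h'
      have l : Fin (if d = d then 3 else 0) := Fin.cast (if_pos rfl).symm 0
      exact (hbase e j l).trans (hbase e' j' l).symm
  · exact continuous_quot_lift _ (continuous_sigma fun e => (φ e).continuous)

/-- Coordinates, up to scaling, of the point of the sphere formed by the cones with apexes `0`
and `j + 1` over the boundary of a cross-polytope that corresponds to a nonzero vector. -/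
noncomputable def coneVec (j : Fin 3) (v : Fin (d + 1) → ℝ) : Fin 4 ⊕ Fin d × Bool → ℝ
  | Sum.inl l => if l = 0 then max (v 0) 0 else if l = j.succ then max (-v 0) 0 else 0
  | Sum.inr p => max (if p.2 then v p.1.succ else -v p.1.succ) 0

theorem coneVec_nonneg (j : Fin 3) (v : Fin (d + 1) → ℝ) (u) : 0 ≤ coneVec j v u := by
  rcases u with l | p
  · simp only [coneVec]
    split_ifs <;> simp
  · exact le_max_right _ _

theorem coneVec_sum (j : Fin 3) (v : Fin (d + 1) → ℝ) : ∑ u, coneVec j v u = ∑ i, |v i| := by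
  rw [Fintype.sum_sum_type, Fin.sum_univ_succ (n := d), ← sum_pos_neg_parts]
  have h : max (v 0) 0 + max (-v 0) 0 = |v 0| := posPart_add_negPart (v 0)
  congr 1
  rw [← h]
  rw [Fin.sum_univ_succ, Finset.sum_eq_single j]
  · simp [coneVec]
  · intro l _ hl
    simp [coneVec, hl]
  · simp

theorem coneVec_face (j : Fin 3) (v : Fin (d + 1) → ℝ) (τ : Finset (Fin 4 ⊕ Fin d × Bool))
    (hτ : ∀ u ∈ τ, coneVec j v u ≠ 0) : ((points 4).join (cross (Fin d))).faces τ := by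
  refine ⟨fun a ha b hb => ?_, fun i hi => ?_⟩
  · have h1 := hτ _ (Finset.mem_toLeft.1 ha)
    have h2 := hτ _ (Finset.mem_toLeft.1 hb)
    simp only [coneVec] at h1 h2
    split_ifs at h1 h2 <;> simp at h1 h2 <;> first | (subst_vars; rfl) | (exfalso; linarith)
  · have h1 := hτ _ (Finset.mem_toRight.1 hi.1)
    have h2 := hτ _ (Finset.mem_toRight.1 hi.2)
    simp [coneVec] at h1 h2
    linarith

theorem coneVec_mul (j : Fin 3) (v w : Fin (d + 1) → ℝ) (c : ℝ) (hc : 0 < c)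
    (h : ∀ i, w i = c * v i) (u) : coneVec j w u = c * coneVec j v u := by
  have hm : ∀ a, max (c * a) 0 = c * max a 0 := fun a => by
    rw [mul_max_of_nonneg _ _ hc.le, mul_zero]
  rcases u with l | ⟨i, b⟩
  · simp only [coneVec, h]
    split_ifs <;> simp [← hm]
  · cases b <;> simp [coneVec, h, ← hm]

theorem continuous_coneVec (j : Fin 3) (u) :
    Continuous fun v : Fin (d + 1) → ℝ => coneVec j v u := by
  rcases u with l | ⟨i, b⟩
  · simp only [coneVec]
    split_ifs <;> fun_prop
  · cases b <;> simp [coneVec] <;> fun_prop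

theorem join_disjoint_left (f : ((points 4).join (cross (Fin d))).space) {a b : Fin 4}
    (h : a ≠ b) : f.coord (Sum.inl a) = 0 ∨ f.coord (Sum.inl b) = 0 := by
  by_contra! h0
  exact h ((faces_of_subset_support f (τ := {Sum.inl a, Sum.inl b}) (by simpa using h0)).1
    a (by simp) b (by simp))

theorem join_disjoint_right (f : ((points 4).join (cross (Fin d))).space) (i : Fin d) :
    f.coord (Sum.inr (i, true)) = 0 ∨ f.coord (Sum.inr (i, false)) = 0 := by
  by_contra! h0
  exact (faces_of_subset_support f (τ := {Sum.inr (i, true), Sum.inr (i, false)})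
    (by simpa using h0)).2 i (by simp)

/-- The points of the cones with apexes `0` and `j + 1`. -/
def twoCones (d : ℕ) (j : Fin 3) : Set ((points 4).join (cross (Fin d))).space :=
  {f | ∀ l, l ≠ j → f.coord (Sum.inl l.succ) = 0}

theorem exists_mem_twoCones (f : ((points 4).join (cross (Fin d))).space) :
    ∃ j, f ∈ twoCones d j := by
  by_cases h : ∃ j : Fin 3, f.coord (Sum.inl j.succ) ≠ 0
  · obtain ⟨j, hj⟩ := h
    refine ⟨j, fun l hl => ?_⟩
    exact (join_disjoint_left f (fun h => hl (Fin.succ_injective _ h))).resolve_right hj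
  · push Not at h
    exact ⟨0, fun l _ => h l⟩

theorem isClosed_twoCones (j : Fin 3) : IsClosed (twoCones d j) := by
  simp only [twoCones, Set.ofPred_forall]
  exact isClosed_iInter fun l => isClosed_iInter fun _ =>
    isClosed_eq (continuous_coord _) continuous_const

/-- On the cones with apexes `0` and `j + 1`, a family of vectors interpolating between the
identity at `t = 0` and, at `t = 1`, a map that contracts the cone with apex `0`. -/
def pushVec (j : Fin 3) (t : ℝ) (f : ((points 4).join (cross (Fin d))).space) :
    Fin (d + 1) → ℝ :=
  Fin.cons ((1 - t) * (f.coord (Sum.inl 0) - f.coord (Sum.inl j.succ)) +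
      t * (1 - 2 * f.coord (Sum.inl j.succ)))
    fun i => (1 - t + t * f.coord (Sum.inl j.succ)) *
      (f.coord (Sum.inr (i, true)) - f.coord (Sum.inr (i, false)))

theorem continuous_pushVec (j : Fin 3) (i : Fin (d + 1)) :
    Continuous fun p : ℝ × ((points 4).join (cross (Fin d))).space => pushVec j p.1 p.2 i := by
  have hc : ∀ u, Continuous fun p : ℝ × ((points 4).join (cross (Fin d))).space =>
      p.2.coord u := fun u => (continuous_coord u).comp continuous_snd
  have h0 := hc (Sum.inl 0)
  have hj := hc (Sum.inl j.succ)
  refine Fin.cases ?_ (fun i => ?_) i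
  · simp only [pushVec, Fin.cons_zero]
    fun_prop
  · have ht := hc (Sum.inr (i, true))
    have hf := hc (Sum.inr (i, false))
    simp only [pushVec, Fin.cons_succ]
    fun_prop

theorem pushVec_ne_zero {j : Fin 3} {f : ((points 4).join (cross (Fin d))).space}
    (hf : f ∈ twoCones d j) {t : ℝ} (h0 : 0 ≤ t) (h1 : t ≤ 1) : pushVec j t f ≠ 0 := by
  intro h
  have hz := congrFun h 0
  simp only [pushVec, Fin.cons_zero, Pi.zero_apply] at hz
  have hnn := space_nonneg f (Sum.inl j.succ)
  by_cases hcoef : 1 - t + t * f.coord (Sum.inl j.succ) = 0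
  · have : 0 ≤ t * f.coord (Sum.inl j.succ) := mul_nonneg h0 hnn
    obtain rfl : t = 1 := by linarith
    have hs : f.coord (Sum.inl j.succ) = 0 := by linarith
    rw [hs] at hz
    norm_num at hz
  · have hr : ∀ p, f.coord (Sum.inr p) = 0 := by
      rintro ⟨i, b⟩
      have hi := congrFun h i.succ
      simp only [pushVec, Fin.cons_succ, Pi.zero_apply, mul_eq_zero, hcoef, false_or] at hi
      cases b <;> rcases join_disjoint_right f i with h2 | h2 <;> linarith
    have hsum := space_sum f
    rw [Fintype.sum_sum_type, Fin.sum_univ_succ, Finset.sum_eq_single j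
      (fun l _ hl => hf l hl) (by simp)] at hsum
    simp only [hr, Finset.sum_const_zero, add_zero] at hsum
    rcases join_disjoint_left f (Fin.succ_ne_zero j) with h2 | h2 <;> rw [h2] at hsum hz <;>
      nlinarith

theorem coneVec_pushVec_zero {j : Fin 3} {f : ((points 4).join (cross (Fin d))).space}
    (hf : f ∈ twoCones d j) (u) : coneVec j (pushVec j 0 f) u = f.coord u := by
  rcases u with l | ⟨i, b⟩
  · have h1 := space_nonneg f (Sum.inl 0)
    have h2 := space_nonneg f (Sum.inl j.succ)
    refine Fin.cases ?_ (fun l => ?_) l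
    · rcases join_disjoint_left f (Fin.succ_ne_zero j) with h | h <;>
        simp [coneVec, pushVec, h, h1, h2]
    · by_cases hl : l = j
      · subst hl
        rcases join_disjoint_left f (Fin.succ_ne_zero l) with h | h <;>
          simp [coneVec, pushVec, h, h1, h2]
      · simp [coneVec, hl, hf l hl]
  · have h1 := space_nonneg f (Sum.inr (i, true))
    have h2 := space_nonneg f (Sum.inr (i, false))
    cases b <;> rcases join_disjoint_right f i with h | h <;> simp [coneVec, pushVec, h, h1, h2]

/-- The coordinates of `coneVec j (pushVec j t f)`, in a form independent of `j`. -/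
def pushCoord (t : ℝ) (f : ((points 4).join (cross (Fin d))).space) :
    Fin 4 ⊕ Fin d × Bool → ℝ
  | Sum.inl l => Fin.cases (motive := fun _ => ℝ)
      (max ((1 - t) * (f.coord (Sum.inl 0) - ∑ j : Fin 3, f.coord (Sum.inl j.succ)) +
        t * (1 - 2 * ∑ j : Fin 3, f.coord (Sum.inl j.succ))) 0)
      (fun j => max (f.coord (Sum.inl j.succ) * (1 + t) - t) 0) l
  | Sum.inr p => (1 - t + t * ∑ j : Fin 3, f.coord (Sum.inl j.succ)) * f.coord (Sum.inr p)

theorem pushCoord_eq {j : Fin 3} {f : ((points 4).join (cross (Fin d))).space}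
    (hf : f ∈ twoCones d j) {t : ℝ} (h0 : 0 ≤ t) (h1 : t ≤ 1) (u) :
    pushCoord t f u = coneVec j (pushVec j t f) u := by
  have hsum : ∑ l : Fin 3, f.coord (Sum.inl l.succ) = f.coord (Sum.inl j.succ) :=
    Finset.sum_eq_single j (fun l _ hl => hf l hl) (by simp)
  have hnn := space_nonneg f (Sum.inl j.succ)
  rcases u with l | ⟨i, b⟩
  · refine Fin.cases ?_ (fun l => ?_) l
    · simp [pushCoord, coneVec, pushVec, hsum]
    · by_cases hl : l = j
      · subst hl
        simp only [pushCoord, coneVec, pushVec, Fin.cases_succ, Fin.succ_ne_zero, if_false, if_true,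
          Fin.cons_zero]
        rcases join_disjoint_left f (Fin.succ_ne_zero l) with h | h
        · rw [h, max_eq_right, max_eq_right]
          · nlinarith [space_nonneg f (Sum.inl 0)]
          · linarith
        · rw [h]
          congr 1
          ring
      · simp [pushCoord, coneVec, hl, hf l hl, h0]
  · have h2 := space_nonneg f (Sum.inr (i, true))
    have h3 := space_nonneg f (Sum.inr (i, false))
    have hc : 0 ≤ 1 - t + t * f.coord (Sum.inl j.succ) :=
      add_nonneg (by linarith) (mul_nonneg h0 hnn)
    have h4 := mul_nonneg hc h2
    have h5 := mul_nonneg hc h3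
    cases b <;> rcases join_disjoint_right f i with h | h <;>
      simp [pushCoord, coneVec, pushVec, hsum, h, h4, h5]

theorem continuous_pushCoord (u) : Continuous
    fun p : ℝ × ((points 4).join (cross (Fin d))).space => pushCoord p.1 p.2 u := by
  have hc : ∀ u, Continuous fun p : ℝ × ((points 4).join (cross (Fin d))).space =>
      p.2.coord u := fun u => (continuous_coord u).comp continuous_snd
  have hs : Continuous fun p : ℝ × ((points 4).join (cross (Fin d))).space =>
      ∑ j : Fin 3, p.2.coord (Sum.inl j.succ) := continuous_finsetSum _ fun j _ => hc _
  rcases u with l | p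
  · refine Fin.cases ?_ (fun l => ?_) l
    · have h0 := hc (Sum.inl 0)
      simp only [pushCoord, Fin.cases_zero]
      fun_prop
    · have hl := hc (Sum.inl l.succ)
      simp only [pushCoord, Fin.cases_succ]
      fun_prop
  · have hp := hc (Sum.inr p)
    simp only [pushCoord]
    fun_prop

end Wedge

section WedgeEquiv

variable {d : ℕ}

theorem pushVec_one_of_eq_zero {j : Fin 3} {f : ((points 4).join (cross (Fin d))).space}
    (hf : f.coord (Sum.inl j.succ) = 0) (i : Fin (d + 1)) :
    pushVec j 1 f i = 1 * (basePt d).1 i := by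
  refine Fin.cases ?_ (fun i => ?_) i <;> simp [pushVec, hf, basePt, Fin.succ_ne_zero]

theorem pushVec_one_ne_zero (j : Fin 3) (f : ((points 4).join (cross (Fin d))).space) :
    pushVec j 1 f ≠ 0 := by
  by_cases hf : f.coord (Sum.inl j.succ) = 0
  · intro h
    simpa [pushVec, hf] using congrFun h 0
  · refine pushVec_ne_zero (fun l hl => ?_) zero_le_one le_rfl
    exact (join_disjoint_left f fun h => hl (Fin.succ_injective _ h)).resolve_right hf

theorem continuous_pushVec_one (j : Fin 3) (i : Fin (d + 1)) :
    Continuous fun f : ((points 4).join (cross (Fin d))).space => pushVec j 1 f i :=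
  (continuous_pushVec j i).comp (continuous_const.prodMk continuous_id)

/-- The map to a sphere that contracts all cones except the one with apex `j + 1`. -/
noncomputable def coneToSphere (d : ℕ) (j : Fin 3) :
    C(((points 4).join (cross (Fin d))).space, sph d) :=
  toSphere (fun f => pushVec j 1 f) (continuous_pushVec_one j) (pushVec_one_ne_zero j)

theorem coneToSphere_eq_basePt {j : Fin 3} {f : ((points 4).join (cross (Fin d))).space}
    (hf : f.coord (Sum.inl j.succ) = 0) : coneToSphere d j f = basePt d :=
  toSphere_eq (fun f => pushVec j 1 f) (continuous_pushVec_one j) (pushVec_one_ne_zero j) f _ 1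
    one_pos (pushVec_one_of_eq_zero hf)

theorem exists_toWedge (d : ℕ) :
    ∃ Φ : C(((points 4).join (cross (Fin d))).space,
        sphereWedge fun e => if e = d then 3 else 0),
      ∀ j, ∀ f ∈ twoCones d j, Φ f = wedgeIncl d j (coneToSphere d j f) := by
  choose J hJ using exists_mem_twoCones (d := d)
  have key : ∀ j, ∀ f ∈ twoCones d j,
      wedgeIncl d (J f) (coneToSphere d (J f) f) = wedgeIncl d j (coneToSphere d j f) := by
    intro j f hf
    by_cases h : J f = j
    · rw [h]
    · rw [coneToSphere_eq_basePt (hf _ h), coneToSphere_eq_basePt (hJ f _ (Ne.symm h))]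
      exact wedgeIncl_basePt d _ _
  refine ⟨⟨fun f => wedgeIncl d (J f) (coneToSphere d (J f) f), ?_⟩, key⟩
  refine (locallyFinite_of_finite (twoCones d)).continuous
    (Set.iUnion_eq_univ_iff.2 exists_mem_twoCones) isClosed_twoCones fun j => ?_
  exact ((wedgeIncl d j).comp (coneToSphere d j)).continuous.continuousOn.congr (key j)

/-- The homeomorphism from a sphere to the cones with apexes `0` and `j + 1`. -/
noncomputable def sphereToCones (d : ℕ) (j : Fin 3) :
    C(sph d, ((points 4).join (cross (Fin d))).space) :=
  normMap _ (fun x => coneVec j fun i => x.1 i)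
    (fun u => (continuous_coneVec j u).comp (continuous_pi fun i => continuous_sphere_coord i))
    (fun x => by
      rw [coneVec_sum]
      exact pos_of_ne_zero (sphere_ne_zero x))
    (fun x => coneVec_nonneg j _) (fun x => coneVec_face j _)

theorem sphereToCones_coord (j : Fin 3) (x : sph d) (u) :
    (sphereToCones d j x).coord u = coneVec j (fun i => x.1 i) u / ∑ i, |x.1 i| := by
  rw [← coneVec_sum j]
  rfl

theorem sphereToCones_mem (j : Fin 3) (x : sph d) : sphereToCones d j x ∈ twoCones d j := by
  intro l hl
  simp [sphereToCones_coord, coneVec, hl]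

theorem sphereToCones_basePt (j l : Fin 3) :
    sphereToCones d j (basePt d) = sphereToCones d l (basePt d) := by
  refine space_ext fun u => ?_
  rw [sphereToCones_coord, sphereToCones_coord]
  rcases u with u | u <;> simp [coneVec, basePt]

theorem pushVec_sphereToCones_succ (j : Fin 3) (x : sph d) (i : Fin d) :
    pushVec j 1 (sphereToCones d j x) i.succ =
      max (-x.1 0) 0 / (∑ i, |x.1 i|) * (x.1 i.succ / ∑ i, |x.1 i|) := by
  simp [pushVec, sphereToCones_coord, coneVec, ← sub_div]

theorem pushVec_sphereToCones_zero (j : Fin 3) (x : sph d) :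
    pushVec j 1 (sphereToCones d j x) 0 = 1 - 2 * (max (-x.1 0) 0 / ∑ i, |x.1 i|) := by
  simp [pushVec, sphereToCones_coord, coneVec]

theorem segment_pushVec_ne_zero (j : Fin 3) (x : sph d) {t : ℝ} (h0 : 0 ≤ t) (h1 : t ≤ 1) :
    (fun i => (1 - t) * x.1 i + t * pushVec j 1 (sphereToCones d j x) i) ≠ 0 := by
  intro h
  have hN := pos_of_ne_zero (sphere_ne_zero x)
  have hz := congrFun h 0
  have hs := fun i : Fin d => congrFun h i.succ
  simp only [pushVec_sphereToCones_succ, pushVec_sphereToCones_zero, Pi.zero_apply] at hz hs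
  have hsum := Fin.sum_univ_succ fun i => |x.1 i|
  set N := ∑ i, |x.1 i|
  set s := max (-x.1 0) 0 / N with hsdef
  have hs0 : 0 ≤ s := div_nonneg (le_max_right _ _) hN.le
  have hts : 0 ≤ t * (s / N) := mul_nonneg h0 (div_nonneg hs0 hN.le)
  by_cases hcoef : (1 - t) + t * (s / N) = 0
  · obtain rfl : t = 1 := by linarith
    have hsN : s / N = 0 := by linarith
    have : s = 0 := by simpa [hN.ne'] using hsN
    rw [this] at hz
    norm_num at hz
  · have hx : ∀ i : Fin d, x.1 i.succ = 0 := fun i => by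
      have : ((1 - t) + t * (s / N)) * x.1 i.succ = 0 := by
        rw [← hs i]
        ring
      exact (mul_eq_zero.1 this).resolve_left hcoef
    simp only [hx, abs_zero, Finset.sum_const_zero, add_zero] at hsum
    have htN : 0 ≤ (1 - t) * N := mul_nonneg (by linarith) hN.le
    rcases le_total 0 (x.1 0) with hx0 | hx0
    · have hsz : s = 0 := by rw [hsdef, max_eq_right (by linarith), zero_div]
      rw [abs_of_nonneg hx0] at hsum
      rw [hsz, ← hsum] at hz
      obtain rfl : t = 0 := by linarith
      linarith
    · have hsz : s = 1 := by
        rw [hsdef, max_eq_left (by linarith), hsum, abs_of_nonpos hx0, div_self]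
        rw [abs_of_nonpos hx0] at hsum
        linarith
      rw [abs_of_nonpos hx0] at hsum
      rw [hsz, ← neg_neg (x.1 0), ← hsum] at hz
      obtain rfl : t = 0 := by linarith
      linarith

/-- A homotopy relative to the base point from the identity to
`coneToSphere d j ∘ sphereToCones d j`. -/
theorem exists_sphere_homotopy (d : ℕ) (j : Fin 3) :
    ∃ R : C(sph d × unitInterval, sph d), (∀ x, R (x, 0) = x) ∧
      (∀ x, R (x, 1) = coneToSphere d j (sphereToCones d j x)) ∧
      ∀ t, R (basePt d, t) = basePt d := by
  let g : sph d × unitInterval → Fin (d + 1) → ℝ := fun p i =>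
    (1 - p.2.1) * p.1.1 i + p.2.1 * pushVec j 1 (sphereToCones d j p.1) i
  have hg : ∀ i, Continuous fun p => g p i := by
    intro i
    have h1 : Continuous fun p : sph d × unitInterval =>
        pushVec j 1 (sphereToCones d j p.1) i :=
      (continuous_pushVec_one j i).comp ((sphereToCones d j).continuous.comp continuous_fst)
    have h2 : Continuous fun p : sph d × unitInterval => p.1.1 i :=
      (continuous_sphere_coord i).comp continuous_fst
    fun_prop
  have h0 : ∀ p, g p ≠ 0 := fun p => segment_pushVec_ne_zero j p.1 p.2.2.1 p.2.2.2
  refine ⟨toSphere g hg h0, fun x => ?_, fun x => ?_, fun t => ?_⟩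
  · exact toSphere_eq g hg h0 _ _ 1 one_pos fun i => by simp [g]
  · obtain ⟨c, hc, hcx⟩ := toSphere_apply (fun f => pushVec j 1 f) (continuous_pushVec_one j)
      (pushVec_one_ne_zero j) (sphereToCones d j x)
    refine toSphere_eq g hg h0 _ _ c⁻¹ (inv_pos.2 hc) fun i => ?_
    have := hcx i
    simp only [coneToSphere]
    rw [this]
    simp [g, hc.ne']
  · refine toSphere_eq g hg h0 _ _ 1 one_pos fun i => ?_
    have : (sphereToCones d j (basePt d)).coord (Sum.inl j.succ) = 0 := by
      simp [sphereToCones_coord, coneVec, basePt]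
    simp only [g, pushVec_one_of_eq_zero this]
    ring

/-- The join of four points with the boundary of a cross-polytope is a wedge of three spheres. -/
theorem homotopyEquiv_points_wedge (d : ℕ) :
    Nonempty (ContinuousMap.HomotopyEquiv ((points 4).join (cross (Fin d))).space
      (sphereWedge fun e => if e = d then 3 else 0)) := by
  obtain ⟨Φ, hΦ⟩ := exists_toWedge d
  obtain ⟨Ψ, hΨ⟩ := exists_wedgeDesc (sphereToCones d) sphereToCones_basePt
  choose R hR0 hR1 hRb using exists_sphere_homotopy d
  refine ⟨Φ, Ψ, ?_, ?_⟩
  · have heq : ∀ (p : unitInterval × ((points 4).join (cross (Fin d))).space), ∃ j,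
        p.2 ∈ twoCones d j ∧ pushCoord p.1.1 p.2 = coneVec j (pushVec j p.1.1 p.2) := by
      intro p
      obtain ⟨j, hj⟩ := exists_mem_twoCones p.2
      exact ⟨j, hj, funext (pushCoord_eq hj p.1.2.1 p.1.2.2)⟩
    let H : C(unitInterval × ((points 4).join (cross (Fin d))).space,
        ((points 4).join (cross (Fin d))).space) :=
      normMap _ (fun p => pushCoord p.1.1 p.2)
        (fun u => (continuous_pushCoord u).comp
          ((continuous_subtype_val.comp continuous_fst).prodMk continuous_snd))
        (fun p => by
          obtain ⟨j, hj, h⟩ := heq p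
          rw [h, coneVec_sum]
          exact pos_of_ne_zero (pushVec_ne_zero hj p.1.2.1 p.1.2.2))
        (fun p u => by
          obtain ⟨j, -, h⟩ := heq p
          rw [h]
          exact coneVec_nonneg j _ u)
        (fun p τ hτ => by
          obtain ⟨j, -, h⟩ := heq p
          exact coneVec_face j _ τ fun u hu => h ▸ hτ u hu)
    refine ContinuousMap.Homotopic.symm ⟨⟨H, fun f => ?_, fun f => ?_⟩⟩
    · obtain ⟨j, hj⟩ := exists_mem_twoCones f
      refine space_ext fun u => ?_
      have hc : pushCoord 0 f = f.coord := funext fun u =>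
        (pushCoord_eq hj le_rfl zero_le_one u).trans (coneVec_pushVec_zero hj u)
      change pushCoord 0 f u / ∑ u, pushCoord 0 f u = f.coord u
      rw [hc, space_sum, div_one]
    · obtain ⟨j, hj⟩ := exists_mem_twoCones f
      refine space_ext fun u => ?_
      have hc : pushCoord 1 f = coneVec j (pushVec j 1 f) :=
        funext (pushCoord_eq hj zero_le_one le_rfl)
      obtain ⟨c, hc0, hcx⟩ := toSphere_apply (fun f => pushVec j 1 f) (continuous_pushVec_one j)
        (pushVec_one_ne_zero j) f
      have hm := coneVec_mul j (pushVec j 1 f) (fun i => (coneToSphere d j f).1 i) c hc0 hcx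
      rw [ContinuousMap.comp_apply, hΦ j f hj, hΨ, sphereToCones_coord, ← coneVec_sum j]
      change pushCoord 1 f u / ∑ u, pushCoord 1 f u = _
      simp only [hm, ← Finset.mul_sum, hc]
      rw [mul_div_mul_left _ _ hc0.ne']
  · obtain ⟨G, hG⟩ := exists_wedgeDesc
      (fun j => ((wedgeIncl d j).comp (R j)).curry) (fun j l => by
        ext t
        simp only [ContinuousMap.curry_apply, ContinuousMap.comp_apply, hRb]
        exact wedgeIncl_basePt d j l)
    have hGt : ∀ j x t, G (wedgeIncl d j x) t = wedgeIncl d j (R j (x, t)) := fun j x t => by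
      rw [hG]
      rfl
    refine ContinuousMap.Homotopic.symm ⟨⟨⟨fun p => G p.2 p.1, ?_⟩, fun w => ?_, fun w => ?_⟩⟩
    · fun_prop
    · obtain ⟨j, x, rfl⟩ := exists_wedgeIncl w
      change G (wedgeIncl d j x) 0 = wedgeIncl d j x
      rw [hGt, hR0]
    · obtain ⟨j, x, rfl⟩ := exists_wedgeIncl w
      change G (wedgeIncl d j x) 1 = Φ (Ψ (wedgeIncl d j x))
      rw [hGt, hR1, hΨ, hΦ j _ (sphereToCones_mem j x)]

end WedgeEquiv

end Cplx

/-- Theorem 5.12 (Taylan): `D(C_{4k})` is homotopy equivalent to a wedge of three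
copies of `S^{2k-1}`, and `D(C_{4k+i})` is homotopy equivalent to `S^{2k-2+i}` for
`i = 1, 2, 3`. -/
theorem dominance_cycle_homotopyEquiv (k : ℕ) (hk : 1 ≤ k) :
    Nonempty (ContinuousMap.HomotopyEquiv (domCpx (cycleGraph (4 * k))).space
      (sphereWedge fun d => if d = 2 * k - 1 then 3 else 0)) ∧
    ∀ i : ℕ, 1 ≤ i → i ≤ 3 → 3 ≤ 4 * k + i →
      Nonempty (ContinuousMap.HomotopyEquiv (domCpx (cycleGraph (4 * k + i))).space
        (Metric.sphere (0 : EuclideanSpace ℝ (Fin (2 * k - 1 + i))) 1)) := by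
  constructor
  · obtain ⟨l, rfl⟩ : ∃ l, k = l + 1 := ⟨k - 1, by omega⟩
    rw [show 4 * (l + 1) = 4 * l + 4 by ring, show 2 * (l + 1) - 1 = 1 + 2 * l by omega]
    obtain ⟨e⟩ := (Cplx.joinEquiv_cycle_points l).homotopyEquiv
    obtain ⟨e'⟩ := Cplx.homotopyEquiv_points_wedge (1 + 2 * l)
    exact ⟨e.trans e'⟩
  · intro i hi hi' _
    have key : Cplx.JoinEquiv (domCpx (cycleGraph i)) (Cplx.cross (Fin (i - 1))) := by
      interval_cases i
      · exact Cplx.joinEquiv_cycle_one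
      · exact Cplx.joinEquiv_cycle_two
      · exact Cplx.joinEquiv_cycle_three
    rw [show 2 * k - 1 + i = i - 1 + 2 * k by omega]
    obtain ⟨e⟩ := (Cplx.joinEquiv_cycle_cross hi key k).homotopyEquiv
    obtain ⟨e'⟩ := Cplx.homotopyEquiv_cross_sphere (i - 1 + 2 * k)
    exact ⟨e.trans e'⟩
end

section
/- Let Γ_n = P_n × P_3 × P_2 and let X_n be the induced subgraph of Γ_n obtained by deleting the three vertices (n,1,1), (n,2,2), (n,3,1). Then for every k ≥ 1 the independence complex I(X_{2k}) is homotopy equivalent to the sphere S^{3k−1}, and for every k ≥ 0 the independence complex I(X_{2k+1}) is contractible. -/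
open SimpleGraph

/-- The independence complex of a graph: the faces are the independent sets. -/
def indepCpx {V : Type} (G : SimpleGraph V) : Cplx V where
  faces σ := ∀ u ∈ σ, ∀ v ∈ σ, ¬ G.Adj u v
  down_closed := fun _ _ hst h u hu v hv => h u (hst hu) v (hst hv)

/-- The vertex set of the grid graph `P_n × P_3 × P_2`. -/
abbrev GV (n : ℕ) : Type := Fin n × Fin 3 × Fin 2

/-- The grid graph `Γ_n = P_n × P_3 × P_2` (cartesian product of paths). -/
def Gam (n : ℕ) : SimpleGraph (GV n) :=
  (pathGraph n).boxProd ((pathGraph 3).boxProd (pathGraph 2))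

/-- The graph `X_{m+1}`: the induced subgraph of `Γ_{m+1} = P_{m+1} × P_3 × P_2`
obtained by deleting the vertices `(m+1,1,1)`, `(m+1,2,2)` and `(m+1,3,1)`
(in the 0-based indexing below: `(m,0,0)`, `(m,1,1)` and `(m,2,0)`). -/
abbrev Xset (m : ℕ) : Set (GV (m + 1)) :=
  {x | x ≠ (Fin.last m, 0, 0) ∧ x ≠ (Fin.last m, 1, 1) ∧ x ≠ (Fin.last m, 2, 0)}

def Xg (m : ℕ) : SimpleGraph ↥(Xset m) := (Gam (m + 1)).induce (Xset m)

namespace Cplx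

variable {V W U : Type} [Fintype V]

/-- The linear extension to barycentric coordinates of a map of vertices. -/
noncomputable def push (φ : V → W) (f : V → ℝ) (w : W) : ℝ := by
  classical exact ∑ v, if φ v = w then f v else 0

theorem continuous_push (φ : V → W) : Continuous (push φ) := by
  classical
  refine continuous_pi fun w => continuous_finsetSum _ fun v _ => ?_
  split_ifs
  · exact continuous_apply v
  · exact continuous_const

theorem push_nonneg (φ : V → W) {f : V → ℝ} (hf : ∀ v, 0 ≤ f v) (w : W) : 0 ≤ push φ f w := by
  classical
  refine Finset.sum_nonneg fun v _ => ?_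
  split_ifs
  exacts [hf v, le_rfl]

theorem sum_push [Fintype W] (φ : V → W) (f : V → ℝ) : ∑ w, push φ f w = ∑ v, f v := by
  classical
  unfold push
  rw [Finset.sum_comm]
  simp

theorem exists_of_push_ne_zero {φ : V → W} {f : V → ℝ} {w : W} (h : push φ f w ≠ 0) :
    ∃ v, f v ≠ 0 ∧ φ v = w := by
  classical
  obtain ⟨v, -, hv⟩ := Finset.exists_ne_zero_of_sum_ne_zero h
  exact ⟨v, by grind⟩

theorem push_push [Fintype W] (φ : V → W) (ψ : W → U) (f : V → ℝ) :
    push ψ (push φ f) = push (ψ ∘ φ) f := by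
  classical
  funext u
  simp only [push, Function.comp]
  simp_rw [← Finset.sum_filter (fun w => ψ w = u), Finset.sum_comm (t := Finset.univ)]
  refine Finset.sum_congr rfl fun v _ => ?_
  simp [Finset.sum_ite_eq]

end Cplx

section FoldEquivalence

variable {V W : Type} [Fintype V] [Fintype W]

/-- Mutually inverse graph maps, up to dominated vertices: `φ` and `ψ` reflect adjacency, and both
composites send every vertex to one with a smaller neighbourhood. -/
structure FoldEquiv {V W : Type} (G : SimpleGraph V) (H : SimpleGraph W) where
  toFun : V → W
  invFun : W → V
  adj_of_toFun : ∀ a b, H.Adj (toFun a) (toFun b) → G.Adj a b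
  adj_of_invFun : ∀ a b, G.Adj (invFun a) (invFun b) → H.Adj a b
  dominated_left : ∀ a b, G.Adj a (invFun (toFun b)) → G.Adj a b
  dominated_right : ∀ a b, H.Adj a (toFun (invFun b)) → H.Adj a b

/-- The support of `f` is a face of the independence complex iff no two vertices at which `f` is
nonzero are adjacent. -/
theorem indepCpx_faces_filter {G : SimpleGraph V} {f : V → ℝ} [DecidablePred fun v => f v ≠ 0] :
    (indepCpx G).faces (Finset.univ.filter fun v => f v ≠ 0) ↔
      ∀ u v, f u ≠ 0 → f v ≠ 0 → ¬ G.Adj u v := by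
  simp only [indepCpx, Finset.mem_filter, Finset.mem_univ, true_and]
  exact ⟨fun h u v hu hv => h u hu v hv, fun h u hu v hv => h u v hu hv⟩

theorem indepCpx_not_adj {G : SimpleGraph V} (f : (indepCpx G).space) {u v : V}
    (hu : f.1 u ≠ 0) (hv : f.1 v ≠ 0) : ¬ G.Adj u v :=
  indepCpx_faces_filter.1 f.2.2.2 u v hu hv

/-- The map of independence complexes induced by a vertex map that reflects adjacency. -/
noncomputable def indepMap {G : SimpleGraph V} {H : SimpleGraph W} (φ : V → W)
    (hφ : ∀ a b, H.Adj (φ a) (φ b) → G.Adj a b) :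
    C((indepCpx G).space, (indepCpx H).space) where
  toFun f := ⟨Cplx.push φ f.1, (Cplx.sum_push φ f.1).trans f.2.1,
    Cplx.push_nonneg φ f.2.2.1, indepCpx_faces_filter.2 fun u v hu hv => by
      obtain ⟨a, ha, rfl⟩ := Cplx.exists_of_push_ne_zero hu
      obtain ⟨b, hb, rfl⟩ := Cplx.exists_of_push_ne_zero hv
      exact fun h => indepCpx_not_adj f ha hb (hφ a b h)⟩
  continuous_toFun :=
    ((Cplx.continuous_push φ).comp continuous_subtype_val).subtype_mk _

/-- A self-map of a graph that shrinks neighbourhoods induces a map homotopic to the identity. -/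
theorem homotopic_id_of_dominated {G : SimpleGraph V} (p : V → V)
    (hp : ∀ a b, G.Adj a (p b) → G.Adj a b)
    (F : C((indepCpx G).space, (indepCpx G).space)) (hF : ∀ f, (F f).1 = Cplx.push p f.1) :
    F.Homotopic (ContinuousMap.id _) := by
  have hpp : ∀ a b, G.Adj (p a) (p b) → G.Adj a b := fun a b h =>
    (hp b a (hp (p a) b h).symm).symm
  refine ⟨⟨⟨fun x => ⟨fun v => (1 - (x.1 : ℝ)) * Cplx.push p x.2.1 v + x.1 * x.2.1 v, ?_, ?_, ?_⟩,
    ?_⟩, ?_, ?_⟩⟩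
  · rw [Finset.sum_add_distrib, ← Finset.mul_sum, ← Finset.mul_sum, Cplx.sum_push, x.2.2.1]
    ring
  · intro v
    have h₁ := x.2.2.2.1 v
    have h₂ := Cplx.push_nonneg p x.2.2.2.1 v
    have h₃ := x.1.2.1
    have h₄ := sub_nonneg.2 x.1.2.2
    positivity
  · have key : ∀ u, (1 - (x.1 : ℝ)) * Cplx.push p x.2.1 u + x.1 * x.2.1 u ≠ 0 →
        ∃ a, x.2.1 a ≠ 0 ∧ (u = a ∨ u = p a) := by
      intro u hu
      by_cases h : x.2.1 u = 0
      · have : Cplx.push p x.2.1 u ≠ 0 := by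
          intro h'
          simp [h, h'] at hu
        obtain ⟨a, ha, rfl⟩ := Cplx.exists_of_push_ne_zero this
        exact ⟨a, ha, Or.inr rfl⟩
      · exact ⟨u, h, Or.inl rfl⟩
    refine indepCpx_faces_filter.2 fun u v hu hv hadj => ?_
    obtain ⟨a, ha, hua⟩ := key u hu
    obtain ⟨b, hb, hvb⟩ := key v hv
    refine indepCpx_not_adj x.2 ha hb ?_
    rcases hua with rfl | rfl <;> rcases hvb with rfl | rfl
    exacts [hadj, hp _ _ hadj, (hp _ _ hadj.symm).symm, hpp _ _ hadj]
  · refine Continuous.subtype_mk (continuous_pi fun v => ?_) _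
    have h₁ : Continuous fun x : unitInterval × (indepCpx G).space => x.2.1 :=
      continuous_subtype_val.comp continuous_snd
    have h₂ := (Cplx.continuous_push p).comp h₁
    have h₃ : Continuous fun x : unitInterval × (indepCpx G).space => (x.1 : ℝ) :=
      continuous_subtype_val.comp continuous_fst
    exact ((continuous_const.sub h₃).mul ((continuous_apply v).comp h₂)).add
      (h₃.mul ((continuous_apply v).comp h₁))
  · intro f
    refine Subtype.ext (funext fun v => ?_)
    simp [hF]
  · intro f
    refine Subtype.ext (funext fun v => ?_)
    simp

/-- Fold equivalent graphs have homotopy equivalent independence complexes. -/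
noncomputable def FoldEquiv.homotopyEquiv {G : SimpleGraph V} {H : SimpleGraph W}
    (e : FoldEquiv G H) :
    ContinuousMap.HomotopyEquiv (indepCpx G).space (indepCpx H).space where
  toFun := indepMap e.toFun e.adj_of_toFun
  invFun := indepMap e.invFun e.adj_of_invFun
  left_inv := homotopic_id_of_dominated (e.invFun ∘ e.toFun) e.dominated_left _
    fun f => Cplx.push_push e.toFun e.invFun f.1
  right_inv := homotopic_id_of_dominated (e.toFun ∘ e.invFun) e.dominated_right _
    fun f => Cplx.push_push e.invFun e.toFun f.1

/-- A fold equivalence extends along a disjoint summand. -/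
def FoldEquiv.sumRight {V W U : Type} {G : SimpleGraph V} {H : SimpleGraph W} (e : FoldEquiv G H)
    (L : SimpleGraph U) : FoldEquiv (G ⊕g L) (H ⊕g L) where
  toFun := Sum.map e.toFun id
  invFun := Sum.map e.invFun id
  adj_of_toFun := by
    rintro (a | a) (b | b) h
    exacts [e.adj_of_toFun a b h, h, h, h]
  adj_of_invFun := by
    rintro (a | a) (b | b) h
    exacts [e.adj_of_invFun a b h, h, h, h]
  dominated_left := by
    rintro (a | a) (b | b) h
    exacts [e.dominated_left a b h, h, h, h]
  dominated_right := by
    rintro (a | a) (b | b) h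
    exacts [e.dominated_right a b h, h, h, h]

/-- The independence complex of a graph with an isolated vertex is a cone. -/
theorem contractibleSpace_of_isolated {G : SimpleGraph V} (v : V) (hv : ∀ a, ¬ G.Adj a v) :
    ContractibleSpace (indepCpx G).space := by
  let e : FoldEquiv G (⊥ : SimpleGraph Unit) :=
    { toFun := fun _ => ()
      invFun := fun _ => v
      adj_of_toFun := fun _ _ h => h.elim
      adj_of_invFun := fun _ _ h => (hv _ h).elim
      dominated_left := fun _ _ h => (hv _ h).elim
      dominated_right := fun _ _ h => h.elim }
  let pt : (indepCpx (⊥ : SimpleGraph Unit)).space :=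
    ⟨fun _ => 1, by simp, by simp, fun _ _ _ _ h => h⟩
  have : Unique (indepCpx (⊥ : SimpleGraph Unit)).space :=
    ⟨⟨pt⟩, fun f => Subtype.ext (funext fun _ => by simpa using f.2.1)⟩
  exact e.homotopyEquiv.contractibleSpace

end FoldEquivalence

section Matching

/-- The disjoint union of edges indexed by `ι`. -/
def matchingGraph (ι : Type) : SimpleGraph (ι × Bool) where
  Adj a b := a.1 = b.1 ∧ a.2 ≠ b.2
  symm := ⟨fun _ _ h => ⟨h.1.symm, h.2.symm⟩⟩
  loopless := ⟨fun _ h => h.2 rfl⟩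

variable {ι : Type} [Fintype ι]

/-- The signed coordinates of a point of the boundary of the cross-polytope. -/
noncomputable def signedCoord (f : ι × Bool → ℝ) : EuclideanSpace ℝ ι :=
  WithLp.toLp 2 fun i => f (i, true) - f (i, false)

/-- The barycentric coordinates of the radial projection to the boundary of the cross-polytope. -/
noncomputable def radialCoord (y : EuclideanSpace ℝ ι) (v : ι × Bool) : ℝ :=
  (if v.2 then max (y v.1) 0 else max (-y v.1) 0) / ∑ i, |y i|

theorem sum_abs_pos {y : EuclideanSpace ℝ ι} (hy : y ≠ 0) : 0 < ∑ i, |y i| := by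
  obtain ⟨i, hi⟩ : ∃ i, y i ≠ 0 := by
    by_contra! h
    exact hy (PiLp.ext h)
  exact Finset.sum_pos' (fun i _ => abs_nonneg _) ⟨i, Finset.mem_univ i, abs_pos.2 hi⟩

theorem radialCoord_smul {c : ℝ} (hc : 0 < c) (y : EuclideanSpace ℝ ι) :
    radialCoord (c • y) = radialCoord y := by
  funext v
  have h : ∑ i, |(c • y) i| = c * ∑ i, |y i| := by
    simp [abs_mul, abs_of_pos hc, Finset.mul_sum]
  have hp : ∀ x : ℝ, max (c * x) 0 = c * max x 0 := fun x => by
    rw [mul_max_of_nonneg _ _ hc.le, mul_zero]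
  have hn : ∀ x : ℝ, max (-(c * x)) 0 = c * max (-x) 0 := fun x => by
    rw [← mul_neg, hp]
  simp only [radialCoord, h]
  simp only [PiLp.smul_apply, smul_eq_mul, hp, hn, ← mul_ite]
  exact mul_div_mul_left _ _ hc.ne'

theorem radialCoord_sum {y : EuclideanSpace ℝ ι} (hy : y ≠ 0) : ∑ v, radialCoord y v = 1 := by
  have h : ∀ i, max (y i) 0 / (∑ i, |y i|) + max (-y i) 0 / (∑ i, |y i|)
      = |y i| / ∑ i, |y i| := fun i => by
    rw [← add_div, max_zero_add_max_neg_zero_eq_abs_self]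
  simp only [radialCoord, Fintype.sum_prod_type, Fintype.sum_bool, if_true, Bool.false_eq_true,
    if_false, h]
  rw [← Finset.sum_div]
  exact div_self (sum_abs_pos hy).ne'

theorem radialCoord_nonneg (y : EuclideanSpace ℝ ι) (v : ι × Bool) : 0 ≤ radialCoord y v := by
  unfold radialCoord
  split_ifs <;> positivity

theorem radialCoord_faces (y : EuclideanSpace ℝ ι)
    [DecidablePred fun v => radialCoord y v ≠ 0] :
    (indepCpx (matchingGraph ι)).faces (Finset.univ.filter fun v => radialCoord y v ≠ 0) := by
  refine indepCpx_faces_filter.2 ?_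
  rintro ⟨i, s⟩ ⟨j, t⟩ hu hv ⟨rfl, hst⟩
  simp only [radialCoord, ne_eq, div_eq_zero_iff, not_or] at hu hv hst
  cases s <;> cases t <;> simp at hu hv hst <;> linarith [hu.1, hv.1]

theorem signedCoord_radialCoord (y : EuclideanSpace ℝ ι) :
    signedCoord (radialCoord y) = (∑ i, |y i|)⁻¹ • y := by
  refine PiLp.ext fun i => ?_
  simp only [signedCoord, radialCoord, if_true, Bool.false_eq_true, if_false, PiLp.smul_apply,
    smul_eq_mul, ← sub_div]
  rw [max_zero_sub_max_neg_zero_eq_self, inv_mul_eq_div]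

theorem eq_zero_or_eq_zero_of_matching (f : (indepCpx (matchingGraph ι)).space) (i : ι) :
    f.1 (i, true) = 0 ∨ f.1 (i, false) = 0 := by
  by_contra! h
  exact indepCpx_not_adj f h.1 h.2 ⟨rfl, by simp⟩

theorem radialCoord_signedCoord (f : (indepCpx (matchingGraph ι)).space) :
    radialCoord (signedCoord f.1) = f.1 := by
  have hsum : ∑ i, |signedCoord f.1 i| = 1 := by
    refine Eq.trans ?_ f.2.1
    rw [Fintype.sum_prod_type]
    refine Finset.sum_congr rfl fun i _ => ?_
    have h₁ := f.2.2.1 (i, true)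
    have h₂ := f.2.2.1 (i, false)
    rcases eq_zero_or_eq_zero_of_matching f i with h | h <;>
      simp [signedCoord, h, abs_of_nonneg, h₁, h₂]
  funext ⟨i, s⟩
  have h₁ := f.2.2.1 (i, true)
  have h₂ := f.2.2.1 (i, false)
  rw [radialCoord, hsum, div_one]
  rcases eq_zero_or_eq_zero_of_matching f i with h | h <;> cases s <;> simp [signedCoord, h, h₁, h₂]

theorem signedCoord_ne_zero (f : (indepCpx (matchingGraph ι)).space) :
    signedCoord f.1 ≠ 0 := by
  intro h
  have h₁ := f.2.1
  rw [← radialCoord_signedCoord f, h] at h₁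
  simp [radialCoord] at h₁

/-- The boundary of the cross-polytope is homeomorphic to the Euclidean sphere. -/
noncomputable def matchingHomeomorph :
    (indepCpx (matchingGraph ι)).space ≃ₜ Metric.sphere (0 : EuclideanSpace ℝ ι) 1 where
  toFun f := ⟨‖signedCoord f.1‖⁻¹ • signedCoord f.1, by
    simpa using norm_smul_inv_norm (𝕜 := ℝ) (signedCoord_ne_zero f)⟩
  invFun y := ⟨radialCoord y.1, radialCoord_sum (ne_zero_of_mem_unit_sphere y),
    radialCoord_nonneg y.1, radialCoord_faces y.1⟩
  left_inv f := Subtype.ext <|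
    (radialCoord_smul (inv_pos.2 (norm_pos_iff.2 (signedCoord_ne_zero f))) _).trans
      (radialCoord_signedCoord f)
  right_inv y := Subtype.ext <| by
    have hpos := sum_abs_pos (ne_zero_of_mem_unit_sphere y)
    have hy : ‖y.1‖ = 1 := norm_eq_of_mem_sphere y
    simp only [signedCoord_radialCoord, norm_smul, hy, norm_inv, Real.norm_eq_abs,
      abs_of_pos hpos, mul_one, inv_inv, smul_smul]
    rw [mul_inv_cancel₀ hpos.ne', one_smul]
  continuous_toFun := by
    have h : Continuous fun f : (indepCpx (matchingGraph ι)).space => signedCoord f.1 := by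
      refine (PiLp.continuous_toLp 2 _).comp (continuous_pi fun i => ?_)
      exact ((continuous_apply _).comp continuous_subtype_val).sub
        ((continuous_apply _).comp continuous_subtype_val)
    exact ((h.norm.inv₀ fun f => norm_ne_zero_iff.2 (signedCoord_ne_zero f)).smul h).subtype_mk _
  continuous_invFun := by
    refine Continuous.subtype_mk (continuous_pi fun v => ?_) _
    have h : ∀ i, Continuous fun y : Metric.sphere (0 : EuclideanSpace ℝ ι) 1 => y.1 i := by
      fun_prop
    refine Continuous.div ?_ (continuous_finsetSum _ fun i _ => (h i).abs)
      fun y => (sum_abs_pos (ne_zero_of_mem_unit_sphere y)).ne'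
    split_ifs
    · exact (h _).max continuous_const
    · exact (h _).neg.max continuous_const

end Matching

/-- The grid `P_n × P_3 × P_2` in which only the vertices of odd `j + k` are kept in the last
layer. -/
abbrev TrimmedVertex (n : ℕ) : Type :=
  {x : GV n // (x.1 : ℕ) + 1 = n → ((x.2.1 : ℕ) + x.2.2) % 2 = 1}

def trimmedGrid (n : ℕ) : SimpleGraph (TrimmedVertex n) := (Gam n).comap Subtype.val

theorem trimmedGrid_adj {n : ℕ} (x y : TrimmedVertex n) :
    (trimmedGrid n).Adj x y ↔
      ((x.1.1 : ℕ) + 1 = y.1.1 ∨ (y.1.1 : ℕ) + 1 = x.1.1) ∧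
        (x.1.2.1 : ℕ) = y.1.2.1 ∧ (x.1.2.2 : ℕ) = y.1.2.2 ∨
      (x.1.1 : ℕ) = y.1.1 ∧
        (((x.1.2.1 : ℕ) + 1 = y.1.2.1 ∨ (y.1.2.1 : ℕ) + 1 = x.1.2.1) ∧
            (x.1.2.2 : ℕ) = y.1.2.2 ∨
          (x.1.2.1 : ℕ) = y.1.2.1 ∧ (x.1.2.2 : ℕ) ≠ y.1.2.2) := by
  simp only [trimmedGrid, Gam, comap_adj, boxProd_adj, pathGraph_adj, Prod.ext_iff, Fin.ext_iff]
  omega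

/-- Retract the last three layers of the trimmed grid onto the leaves of the last layer and their
neighbours, and reflect the remaining layers. -/
def trimmedGridRetract (n : ℕ) (x : TrimmedVertex (n + 2)) : TrimmedVertex n ⊕ Fin 3 × Bool :=
  if h : (x.1.1 : ℕ) < n ∧ ((x.1.1 : ℕ) + 1 = n → ((x.1.2.1 : ℕ) + x.1.2.2) % 2 = 0) then
    .inl ⟨(⟨x.1.1, h.1⟩, x.1.2.1, x.1.2.2.rev), by
      have := h.2
      simp only [Fin.val_rev]
      omega⟩
  else .inr (x.1.2.1, decide ((x.1.1 : ℕ) ≠ n ∨ ((x.1.2.1 : ℕ) + x.1.2.2) % 2 = 0))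

/-- The inclusion right inverse to `trimmedGridRetract`. -/
def trimmedGridInclusion (n : ℕ) : TrimmedVertex n ⊕ Fin 3 × Bool → TrimmedVertex (n + 2) :=
  Sum.elim
    (fun x => ⟨(⟨x.1.1, by omega⟩, x.1.2.1, x.1.2.2.rev), by simp; omega⟩)
    (fun y => ⟨(⟨if y.2 then n + 1 else n, by split <;> omega⟩, y.1,
      ⟨(y.1 + 1) % 2, by omega⟩), by simp; omega⟩)

theorem trimmedGridRetract_inclusion (n : ℕ) (y : TrimmedVertex n ⊕ Fin 3 × Bool) :
    trimmedGridRetract n (trimmedGridInclusion n y) = y := by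
  rcases y with x | ⟨j, s⟩
  · have h₁ := x.2
    have h₂ := x.1.1.2
    rw [trimmedGridRetract, dif_pos]
    · simp [trimmedGridInclusion]
    · simp [trimmedGridInclusion, Fin.val_rev]
      omega
  · rw [trimmedGridRetract, dif_neg]
    · cases s
      · simp [trimmedGridInclusion]
        omega
      · simp [trimmedGridInclusion]
    · cases s <;> simp [trimmedGridInclusion]

/-- Folding the last two layers of the trimmed grid onto three edges. -/
def trimmedGridFold (n : ℕ) :
    FoldEquiv (trimmedGrid (n + 2)) (trimmedGrid n ⊕g matchingGraph (Fin 3)) where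
  toFun := trimmedGridRetract n
  invFun := trimmedGridInclusion n
  adj_of_toFun a b h := by
    have ha := a.2
    have hb := b.2
    have ha' := a.1.1.2
    have hb' := b.1.1.2
    unfold trimmedGridRetract at h
    split_ifs at h
    all_goals
      simp [trimmedGrid_adj, matchingGraph, Fin.val_rev, Fin.ext_iff] at h ⊢
    any_goals omega
    rw [Bool.eq_iff_iff] at h
    simp at h
    omega
  adj_of_invFun := by
    rintro (a | ⟨j, s⟩) (b | ⟨j', t⟩) h
    · simp [trimmedGridInclusion, trimmedGrid_adj, Fin.val_rev] at h ⊢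
      omega
    · have := a.2
      have := a.1.1.2
      cases t <;> simp [trimmedGridInclusion, trimmedGrid_adj, Fin.val_rev] at h <;> omega
    · have := b.2
      have := b.1.1.2
      cases s <;> simp [trimmedGridInclusion, trimmedGrid_adj, Fin.val_rev] at h <;> omega
    · cases s <;> cases t <;>
        simp [trimmedGridInclusion, trimmedGrid_adj, matchingGraph, Fin.ext_iff] at h ⊢ <;> omega
  dominated_left a b h := by
    have ha := a.2
    have hb := b.2
    have ha' := a.1.1.2
    have hb' := b.1.1.2
    unfold trimmedGridRetract at h
    split_ifs at h with h₁
    · simpa [trimmedGridInclusion] using h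
    · by_cases h₂ : (b.1.1 : ℕ) ≠ n ∨ ((b.1.2.1 : ℕ) + b.1.2.2) % 2 = 0
      · simp [trimmedGridInclusion, trimmedGrid_adj, h₂] at h ⊢
        omega
      · simp [trimmedGridInclusion, trimmedGrid_adj, h₂] at h ⊢
        omega
  dominated_right a b h := by
    rwa [trimmedGridRetract_inclusion] at h

def sumMatchingAssoc {V ι κ : Type} (G : SimpleGraph V) :
    FoldEquiv ((G ⊕g matchingGraph κ) ⊕g matchingGraph ι) (G ⊕g matchingGraph (κ ⊕ ι)) where
  toFun := Sum.elim (Sum.map id (Prod.map .inl id)) (.inr ∘ Prod.map .inr id)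
  invFun := Sum.elim (.inl ∘ .inl)
    fun y => y.1.elim (fun a => .inl (.inr (a, y.2))) fun a => .inr (a, y.2)
  adj_of_toFun := by
    rintro ((a | a) | a) ((b | b) | b) <;> simp [matchingGraph]
  adj_of_invFun := by
    rintro (a | ⟨a | a, s⟩) (b | ⟨b | b, t⟩) <;> simp [matchingGraph]
  dominated_left := by
    rintro ((a | a) | a) ((b | b) | b) <;> simp [matchingGraph]
  dominated_right := by
    rintro (a | ⟨a | a, s⟩) (b | ⟨b | b, t⟩) <;> simp [matchingGraph]

/-- Removing two layers from the trimmed grid adds three disjoint edges. -/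
theorem trimmedGrid_homotopyEquiv_step (n : ℕ) (ι : Type) [Fintype ι] :
    Nonempty (ContinuousMap.HomotopyEquiv
      (indepCpx (trimmedGrid (n + 2) ⊕g matchingGraph ι)).space
      (indepCpx (trimmedGrid n ⊕g matchingGraph (Fin 3 ⊕ ι))).space) :=
  ⟨((trimmedGridFold n).sumRight _).homotopyEquiv.trans (sumMatchingAssoc _).homotopyEquiv⟩

def trimmedGridZero (ι : Type) :
    FoldEquiv (trimmedGrid 0 ⊕g matchingGraph ι) (matchingGraph ι) where
  toFun := Sum.elim (fun x => x.1.1.elim0) id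
  invFun := .inr
  adj_of_toFun := by
    rintro (a | a) (b | b) h
    exacts [a.1.1.elim0, a.1.1.elim0, b.1.1.elim0, h]
  adj_of_invFun := fun _ _ h => h
  dominated_left := by
    rintro a (b | b) h
    exacts [b.1.1.elim0, h]
  dominated_right := fun _ _ h => h

theorem trimmedGrid_even (k : ℕ) (ι : Type) [Fintype ι] :
    Nonempty (ContinuousMap.HomotopyEquiv
      (indepCpx (trimmedGrid (2 * k) ⊕g matchingGraph ι)).space
      (Metric.sphere (0 : EuclideanSpace ℝ (Fin (3 * k + Fintype.card ι))) 1)) := by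
  induction k generalizing ι with
  | zero =>
    let e := LinearIsometryEquiv.piLpCongrLeft 2 ℝ ℝ
      ((Fintype.equivFin ι).trans (finCongr (by omega : _ = 3 * 0 + Fintype.card ι)))
    have he : Metric.sphere (0 : EuclideanSpace ℝ ι) 1 ≃ₜ
        Metric.sphere (0 : EuclideanSpace ℝ (Fin (3 * 0 + Fintype.card ι))) 1 :=
      e.toHomeomorph.subtype fun x => by simp
    exact ⟨((trimmedGridZero ι).homotopyEquiv.trans matchingHomeomorph.toHomotopyEquiv).trans
      he.toHomotopyEquiv⟩
  | succ k ih =>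
    obtain ⟨e⟩ := trimmedGrid_homotopyEquiv_step (2 * k) ι
    obtain ⟨e'⟩ := ih (Fin 3 ⊕ ι)
    have h : 3 * k + Fintype.card (Fin 3 ⊕ ι) = 3 * (k + 1) + Fintype.card ι := by
      simp
      ring
    rw [h] at e'
    exact ⟨e.trans e'⟩

theorem trimmedGrid_odd (k : ℕ) (ι : Type) [Fintype ι] :
    ContractibleSpace (indepCpx (trimmedGrid (2 * k + 1) ⊕g matchingGraph ι)).space := by
  induction k generalizing ι with
  | zero =>
    refine contractibleSpace_of_isolated (.inl ⟨(⟨0, by omega⟩, 1, 0), by simp⟩) ?_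
    rintro (x | a)
    · have h := x.2
      simp [trimmedGrid_adj] at h ⊢
      omega
    · simp
  | succ k ih =>
    obtain ⟨e⟩ := trimmedGrid_homotopyEquiv_step (2 * k + 1) ι
    have := ih (Fin 3 ⊕ ι)
    exact e.contractibleSpace

theorem mem_Xset_iff {m : ℕ} (x : GV (m + 1)) :
    x ∈ Xset m ↔ ((x.1 : ℕ) + 1 = m + 1 → ((x.2.1 : ℕ) + x.2.2) % 2 = 1) := by
  obtain ⟨i, j, k⟩ := x
  simp only [Set.mem_ofPred_eq, ne_eq, Prod.mk.injEq, Fin.ext_iff, Fin.val_last]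
  have := j.2
  have := k.2
  simp
  omega

/-- The graph `X_{m+1}` is the trimmed grid. -/
def XgEquivTrimmedGrid (m : ℕ) :
    FoldEquiv (Xg m) (trimmedGrid (m + 1) ⊕g matchingGraph Empty) where
  toFun x := .inl ⟨x.1, (mem_Xset_iff x.1).1 x.2⟩
  invFun := Sum.elim (fun x => ⟨x.1, (mem_Xset_iff x.1).2 x.2⟩) fun y => y.1.elim
  adj_of_toFun _ _ h := h
  adj_of_invFun := by
    rintro (a | a) (b | b) h
    exacts [h, b.1.elim, a.1.elim, a.1.elim]
  dominated_left _ _ h := h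
  dominated_right := by
    rintro a (b | b) h
    exacts [h, b.1.elim]

/-- Lemma 6.2: the independence complex of `X_{2k}` is homotopy equivalent to
`S^{3k-1}`, and the independence complex of `X_{2k+1}` is contractible. -/
theorem indep_X_homotopyEquiv :
    (∀ k : ℕ, 1 ≤ k → Nonempty (ContinuousMap.HomotopyEquiv
      (indepCpx (Xg (2 * k - 1))).space
      (Metric.sphere (0 : EuclideanSpace ℝ (Fin (3 * k))) 1))) ∧
    (∀ k : ℕ, ContractibleSpace (indepCpx (Xg (2 * k))).space) := by
  refine ⟨fun k hk => ?_, fun k => ?_⟩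
  · obtain ⟨k, rfl⟩ := Nat.exists_eq_add_of_le' hk
    obtain ⟨e⟩ := trimmedGrid_even (k + 1) Empty
    exact ⟨(XgEquivTrimmedGrid (2 * (k + 1) - 1)).homotopyEquiv.trans e⟩
  · have := trimmedGrid_odd k Empty
    exact (XgEquivTrimmedGrid (2 * k)).homotopyEquiv.contractibleSpace
end

section
/- Let Γ_n = P_n × P_3 × P_2 and let Y_n be the induced subgraph of Γ_n obtained by deleting the two vertices (n,2,1), (n,2,2). Then for every k ≥ 1 the independence complex I(Y_{2k}) is homotopy equivalent to the sphere S^{3k−1}, and for every k ≥ 0 the independence complex I(Y_{2k+1}) is homotopy equivalent to the sphere S^{3k+1}. -/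
open SimpleGraph

/-- The graph `Y_{m+1}`: the induced subgraph of `Γ_{m+1} = P_{m+1} × P_3 × P_2`
obtained by deleting the vertices `(m+1,2,1)` and `(m+1,2,2)`
(in the 0-based indexing below: `(m,1,0)` and `(m,1,1)`). -/
abbrev Yset (m : ℕ) : Set (GV (m + 1)) :=
  {x | x ≠ (Fin.last m, 1, 0) ∧ x ≠ (Fin.last m, 1, 1)}

def Yg (m : ℕ) : SimpleGraph ↥(Yset m) := (Gam (m + 1)).induce (Yset m)

section ShiftMass

variable {V : Type} [DecidableEq V]

/-- Move the fraction `t` of the mass of `f` at `v` to `u`. -/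
def shiftMass (u v : V) (t : ℝ) (f : V → ℝ) (w : V) : ℝ :=
  f w + t * f v * ((if w = u then 1 else 0) - (if w = v then 1 else 0))

theorem continuous_shiftMass (u v : V) :
    Continuous fun p : ℝ × (V → ℝ) => shiftMass u v p.1 p.2 := by
  unfold shiftMass
  fun_prop

theorem sum_shiftMass [Fintype V] (u v : V) (t : ℝ) (f : V → ℝ) :
    ∑ w, shiftMass u v t f w = ∑ w, f w := by
  simp [shiftMass, Finset.sum_add_distrib, ← Finset.mul_sum]

theorem shiftMass_of_eq_zero {u v : V} {f : V → ℝ} (hf : f v = 0) (t : ℝ) :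
    shiftMass u v t f = f := by
  ext w
  simp [shiftMass, hf]

theorem shiftMass_zero (u v : V) (f : V → ℝ) : shiftMass u v 0 f = f := by
  ext w
  simp [shiftMass]

theorem shiftMass_one_apply_self {u v : V} (huv : u ≠ v) (f : V → ℝ) :
    shiftMass u v 1 f v = 0 := by
  simp [shiftMass, huv.symm]

end ShiftMass

/-- Radial projection between the unit spheres of two positively homogeneous gauges. -/
noncomputable def radialHomeo {E : Type*} [TopologicalSpace E] [AddCommGroup E] [Module ℝ E]
    [ContinuousSMul ℝ E] (a b : E → ℝ) (ha : Continuous a) (hb : Continuous b)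
    (ha_smul : ∀ c : ℝ, 0 ≤ c → ∀ x, a (c • x) = c * a x)
    (hb_smul : ∀ c : ℝ, 0 ≤ c → ∀ x, b (c • x) = c * b x)
    (ha_pos : ∀ x, x ≠ 0 → 0 < a x) (hb_pos : ∀ x, x ≠ 0 → 0 < b x) :
    {x // a x = 1} ≃ₜ {x // b x = 1} :=
  have pos_of : ∀ c d : E → ℝ, (∀ r : ℝ, 0 ≤ r → ∀ x, c (r • x) = r * c x) →
      (∀ x, x ≠ 0 → 0 < d x) → ∀ x, c x = 1 → 0 < d x := by
    intro c d hc hd x hx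
    refine hd x ?_
    rintro rfl
    have := hc 0 le_rfl 0
    rw [zero_smul, hx] at this
    norm_num at this
  have hb' : ∀ x : {x // a x = 1}, 0 < b x := fun x => pos_of a b ha_smul hb_pos x x.2
  have ha' : ∀ x : {x // b x = 1}, 0 < a x := fun x => pos_of b a hb_smul ha_pos x x.2
  { toFun := fun x => ⟨(b x)⁻¹ • (x : E), by
      rw [hb_smul _ (inv_nonneg.2 (hb' x).le), inv_mul_cancel₀ (hb' x).ne']⟩
    invFun := fun x => ⟨(a x)⁻¹ • (x : E), by
      rw [ha_smul _ (inv_nonneg.2 (ha' x).le), inv_mul_cancel₀ (ha' x).ne']⟩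
    left_inv := fun x => Subtype.ext <| by
      simp only [ha_smul _ (inv_nonneg.2 (hb' x).le), x.2, mul_one, inv_inv,
        smul_inv_smul₀ (hb' x).ne']
    right_inv := fun x => Subtype.ext <| by
      simp only [hb_smul _ (inv_nonneg.2 (ha' x).le), x.2, mul_one, inv_inv,
        smul_inv_smul₀ (ha' x).ne']
    continuous_toFun := Continuous.subtype_mk
      (((hb.comp continuous_subtype_val).inv₀ fun x => (hb' x).ne').smul
        continuous_subtype_val) _
    continuous_invFun := Continuous.subtype_mk
      (((ha.comp continuous_subtype_val).inv₀ fun x => (ha' x).ne').smul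
        continuous_subtype_val) _ }

/-- The positive part of `x` for the sign `0` and its negative part for the sign `1`. -/
noncomputable def signPart (s : Fin 2) (x : ℝ) : ℝ := if s = 0 then max x 0 else max (-x) 0

theorem signPart_nonneg (s : Fin 2) (x : ℝ) : 0 ≤ signPart s x := by
  unfold signPart
  split_ifs <;> exact le_max_right _ _

theorem continuous_signPart (s : Fin 2) : Continuous (signPart s) := by
  unfold signPart
  split_ifs <;> fun_prop

theorem signPart_add (x : ℝ) : signPart 0 x + signPart 1 x = |x| := by
  rcases le_total 0 x with h | h <;> simp [signPart, h, abs_of_nonneg, abs_of_nonpos]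

theorem signPart_sub (x : ℝ) : signPart 0 x - signPart 1 x = x := by
  rcases le_total 0 x with h | h <;> simp [signPart, h]

theorem signPart_eq_zero_or {s t : Fin 2} (hst : s ≠ t) (x : ℝ) :
    signPart s x = 0 ∨ signPart t x = 0 := by
  fin_cases s <;> fin_cases t <;> simp [signPart] at hst ⊢ <;> exact le_total _ _

theorem signPart_sub_apply {g : Fin 2 → ℝ} (hg : ∀ s, 0 ≤ g s) (h0 : g 0 = 0 ∨ g 1 = 0)
    (s : Fin 2) : signPart s (g 0 - g 1) = g s := by
  have h1 := hg 0
  have h2 := hg 1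
  rcases h0 with h | h <;> fin_cases s <;> simp [signPart, h, h1, h2]

section CrossCoords

variable {V ι : Type} {S : Set V}

open Classical in
/-- The barycentric coordinates of a point of the cross-polytope whose pairs of opposite vertices
are matched by `e`. -/
noncomputable def crossCoords (e : S ≃ ι × Fin 2) (y : ι → ℝ) (v : V) : ℝ :=
  if h : v ∈ S then signPart (e ⟨v, h⟩).2 (y (e ⟨v, h⟩).1) else 0

theorem crossCoords_symm (e : S ≃ ι × Fin 2) (y : ι → ℝ) (p : ι × Fin 2) :
    crossCoords e y (e.symm p) = signPart p.2 (y p.1) := by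
  simp [crossCoords]

theorem crossCoords_of_notMem (e : S ≃ ι × Fin 2) (y : ι → ℝ) {v : V} (hv : v ∉ S) :
    crossCoords e y v = 0 := by
  simp [crossCoords, hv]

theorem continuous_crossCoords (e : S ≃ ι × Fin 2) : Continuous (crossCoords e) := by
  refine continuous_pi fun v => ?_
  by_cases hv : v ∈ S
  · simp only [crossCoords, hv, dif_pos]
    exact (continuous_signPart _).comp (continuous_apply _)
  · simp only [crossCoords, hv, dif_neg, not_false_eq_true]
    exact continuous_const

/-- The signed coordinates of a point of the cross-polytope. -/
noncomputable def signedCoords (e : S ≃ ι × Fin 2) (f : V → ℝ) (p : ι) : ℝ :=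
  f (e.symm (p, 0)) - f (e.symm (p, 1))

theorem signedCoords_crossCoords (e : S ≃ ι × Fin 2) (y : ι → ℝ) :
    signedCoords e (crossCoords e y) = y := by
  ext p
  simp [signedCoords, crossCoords_symm, signPart_sub]

end CrossCoords

/-- The complex of independent sets of `G` that are contained in `T`. -/
def indepOn {V : Type} (G : SimpleGraph V) (T : Set V) : Cplx V where
  faces σ := (∀ u ∈ σ, u ∈ T) ∧ ∀ u ∈ σ, ∀ v ∈ σ, ¬ G.Adj u v
  down_closed := fun _ _ hst h =>
    ⟨fun u hu => h.1 u (hst hu), fun u hu v hv => h.2 u (hst hu) v (hst hv)⟩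

section Realization

variable {V : Type} [Fintype V]

namespace Cplx

/-- The barycentric coordinates of a point of the geometric realization. -/
def coords {K : Cplx V} (x : K.space) : V → ℝ := x.1

theorem continuous_coords (K : Cplx V) : Continuous (coords : K.space → V → ℝ) :=
  continuous_subtype_val

theorem coords_injective (K : Cplx V) : Function.Injective (coords : K.space → V → ℝ) :=
  Subtype.val_injective

theorem continuous_of_coords {X : Type*} [TopologicalSpace X] {K : Cplx V} {g : X → K.space}
    (hg : Continuous fun x => coords (g x)) : Continuous g :=
  continuous_induced_rng.2 hg

end Cplx

open Cplx

/-- The conditions on barycentric coordinates that define the realization of `indepOn G T`. -/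
structure IsIndepPoint (G : SimpleGraph V) (T : Set V) (f : V → ℝ) : Prop where
  sum_eq_one : ∑ v, f v = 1
  nonneg : ∀ v, 0 ≤ f v
  mem_of_ne_zero : ∀ v, f v ≠ 0 → v ∈ T
  not_adj : ∀ u v, f u ≠ 0 → f v ≠ 0 → ¬ G.Adj u v

variable {G : SimpleGraph V} {T : Set V}

theorem isIndepPoint_coords (x : (indepOn G T).space) : IsIndepPoint G T (coords x) := by
  obtain ⟨f, h1, h2, h3, h4⟩ := x
  exact ⟨h1, h2, fun v hv => h3 v (by simpa using show f v ≠ 0 from hv),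
    fun u v hu hv => h4 u (by simpa using show f u ≠ 0 from hu)
      v (by simpa using show f v ≠ 0 from hv)⟩

/-- The point of the realization with given barycentric coordinates. -/
def IsIndepPoint.point {f : V → ℝ} (h : IsIndepPoint G T f) : (indepOn G T).space :=
  ⟨f, h.sum_eq_one, h.nonneg, fun v hv => h.mem_of_ne_zero v (by simpa using hv),
    fun u hu v hv => h.not_adj u v (by simpa using hu) (by simpa using hv)⟩

theorem IsIndepPoint.mono {T' : Set V} (hT : T ⊆ T') {f : V → ℝ} (h : IsIndepPoint G T f) :
    IsIndepPoint G T' f :=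
  ⟨h.sum_eq_one, h.nonneg, fun v hv => hT (h.mem_of_ne_zero v hv), h.not_adj⟩

/-- Restricting to independent sets contained in the whole vertex set changes nothing. -/
def indepCpxHomeo (G : SimpleGraph V) :
    (indepCpx G).space ≃ₜ (indepOn G Set.univ).space where
  toFun x := ⟨x.1, x.2.1, x.2.2.1, fun _ _ => trivial, x.2.2.2⟩
  invFun x := ⟨x.1, x.2.1, x.2.2.1, x.2.2.2.2⟩
  left_inv _ := rfl
  right_inv _ := rfl
  continuous_toFun := continuous_of_coords (continuous_coords _)
  continuous_invFun := continuous_of_coords (continuous_coords _)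

section Fold

variable [DecidableEq V]

theorem isIndepPoint_shiftMass {u v : V} (hu : u ∈ T) (huv : u ≠ v)
    (hN : ∀ x ∈ T, G.Adj u x → G.Adj v x) {f : V → ℝ} (hf : IsIndepPoint G T f) {t : ℝ}
    (ht0 : 0 ≤ t) (ht1 : t ≤ 1) : IsIndepPoint G T (shiftMass u v t f) := by
  by_cases hv : f v = 0
  · rwa [shiftMass_of_eq_zero hv]
  have supp : ∀ w, shiftMass u v t f w ≠ 0 → f w ≠ 0 ∨ w = u := by
    intro w hw
    by_contra! h
    have hwv : w ≠ v := by
      rintro rfl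
      exact hv h.1
    exact hw (by simp [shiftMass, h.1, h.2, hwv])
  have key : ∀ w, f w ≠ 0 → ¬ G.Adj u w := fun w hw h =>
    hf.not_adj v w hv hw (hN w (hf.mem_of_ne_zero w hw) h)
  refine ⟨by rw [sum_shiftMass, hf.sum_eq_one], fun w => ?_, fun w hw => ?_, fun w x hw hx => ?_⟩
  · have h0 := hf.nonneg w
    have h1 := hf.nonneg v
    unfold shiftMass
    by_cases hwv : w = v
    · subst hwv
      simp only [huv.symm, if_false, if_true]
      nlinarith
    · simp only [hwv, if_false, sub_zero]
      have : 0 ≤ t * f v := mul_nonneg ht0 h1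
      split_ifs <;> linarith
  · rcases supp w hw with h | rfl
    · exact hf.mem_of_ne_zero w h
    · exact hu
  · rcases supp w hw with h | rfl <;> rcases supp x hx with h' | rfl
    · exact hf.not_adj w x h h'
    · exact fun ha => key w h ha.symm
    · exact key x h'
    · exact G.loopless.irrefl _

/-- **Fold lemma**: if the neighbours of `u` within `T` are neighbours of `v`, then deleting `v`
does not change the homotopy type of the independence complex. -/
theorem nonempty_homotopyEquiv_fold {u v : V} (hu : u ∈ T) (huv : u ≠ v)
    (hN : ∀ x ∈ T, G.Adj u x → G.Adj v x) :
    Nonempty (ContinuousMap.HomotopyEquiv (indepOn G T).space (indepOn G (T \ {v})).space) := by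
  have hshift : ∀ (t : unitInterval) (x : (indepOn G T).space),
      IsIndepPoint G T (shiftMass u v t (coords x)) := fun t x =>
    isIndepPoint_shiftMass hu huv hN (isIndepPoint_coords x) t.2.1 t.2.2
  have hretract : ∀ x : (indepOn G T).space,
      IsIndepPoint G (T \ {v}) (shiftMass u v 1 (coords x)) := by
    intro x
    have h := hshift 1 x
    refine ⟨h.sum_eq_one, h.nonneg, fun w hw => ⟨h.mem_of_ne_zero w hw, ?_⟩, h.not_adj⟩
    rintro rfl
    exact hw (shiftMass_one_apply_self huv _)
  have hincl : ∀ x : (indepOn G (T \ {v})).space, IsIndepPoint G T (coords x) := fun x =>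
    (isIndepPoint_coords x).mono Set.sdiff_subset
  let retract : C((indepOn G T).space, (indepOn G (T \ {v})).space) :=
    ⟨fun x => (hretract x).point, continuous_of_coords
      ((continuous_shiftMass u v).comp (continuous_const.prodMk (continuous_coords _)))⟩
  let incl : C((indepOn G (T \ {v})).space, (indepOn G T).space) :=
    ⟨fun x => (hincl x).point, continuous_of_coords (continuous_coords _)⟩
  let homotopy : (ContinuousMap.id _).Homotopy (incl.comp retract) :=
    { toFun := fun p => (hshift p.1 p.2).point
      continuous_toFun := continuous_of_coords ((continuous_shiftMass u v).comp
        ((continuous_subtype_val.comp continuous_fst).prodMk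
          ((continuous_coords _).comp continuous_snd)))
      map_zero_left := fun x => coords_injective _ (shiftMass_zero u v _)
      map_one_left := fun x => rfl }
  have hright : retract.comp incl = ContinuousMap.id _ := by
    ext x
    refine coords_injective _ (shiftMass_of_eq_zero ?_ 1)
    by_contra h
    exact ((isIndepPoint_coords x).mem_of_ne_zero v h).2 rfl
  exact ⟨⟨retract, incl, ⟨homotopy.symm⟩, hright ▸ ContinuousMap.Homotopic.refl _⟩⟩

end Fold

/-- Repeated folding: all vertices outside `S` may be deleted, in order of increasing rank `r`. -/
theorem nonempty_homotopyEquiv_dismantle (S : Set V) (r : V → ℕ)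
    (h : ∀ v ∉ S, ∃ u ∈ S, ∀ x, G.Adj u x → G.Adj v x ∨ (x ∉ S ∧ r x < r v)) :
    ∀ T : Set V, S ⊆ T →
      Nonempty (ContinuousMap.HomotopyEquiv (indepOn G T).space (indepOn G S).space) := by
  classical
  intro T
  induction hc : (T \ S).ncard generalizing T with
  | zero =>
    intro hST
    have hTS : T = S :=
      (Set.sdiff_eq_empty.1 ((Set.ncard_eq_zero (Set.toFinite _)).1 hc)).antisymm hST
    exact hTS ▸ ⟨ContinuousMap.HomotopyEquiv.refl _⟩
  | succ n ih =>
    intro hST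
    have hne : (T \ S).Nonempty := Set.nonempty_of_ncard_ne_zero (by omega)
    obtain ⟨v, hv, hmin⟩ := Set.exists_min_image (T \ S) r (Set.toFinite _) hne
    obtain ⟨u, hu, hux⟩ := h v hv.2
    have huv : u ≠ v := fun e => hv.2 (e ▸ hu)
    have hS : S ⊆ T \ {v} := fun x hx => ⟨hST hx, fun e => hv.2 (e ▸ hx)⟩
    have hcard : ((T \ {v}) \ S).ncard = n := by
      rw [Set.sdiff_sdiff_comm, Set.ncard_sdiff_singleton_of_mem hv, hc, Nat.add_sub_cancel]
    obtain ⟨e₁⟩ := nonempty_homotopyEquiv_fold (hST hu) huv fun x hx ha =>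
      (hux x ha).resolve_right fun hlt => (hmin x ⟨hx, hlt.1⟩).not_gt hlt.2
    obtain ⟨e₂⟩ := ih (T \ {v}) hcard hS
    exact ⟨e₁.trans e₂⟩

section CrossPolytope

variable {S : Set V} {ι : Type}

theorem crossCoords_signedCoords (e : S ≃ ι × Fin 2)
    (he : ∀ p, G.Adj (e.symm (p, 0)) (e.symm (p, 1))) {f : V → ℝ} (hf : IsIndepPoint G S f) :
    crossCoords e (signedCoords e f) = f := by
  ext v
  by_cases hv : v ∈ S
  · obtain ⟨p, hp⟩ := e.symm.surjective ⟨v, hv⟩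
    obtain rfl : ↑(e.symm p) = v := congrArg Subtype.val hp
    rw [crossCoords_symm]
    refine signPart_sub_apply (g := fun s => f (e.symm (p.1, s))) (fun s => hf.nonneg _) ?_ p.2
    by_contra! h
    exact hf.not_adj _ _ h.1 h.2 (he p.1)
  · rw [crossCoords_of_notMem e _ hv]
    by_contra h
    exact hv (hf.mem_of_ne_zero v (Ne.symm h))

variable [Fintype ι]

theorem sum_crossCoords (e : S ≃ ι × Fin 2) (y : ι → ℝ) :
    ∑ v, crossCoords e y v = ∑ p, |y p| := by
  classical
  rw [← Fintype.sum_subtype_add_sum_subtype (· ∈ S),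
    Finset.sum_eq_zero (s := (Finset.univ : Finset {v // v ∉ S}))
      (fun v _ => crossCoords_of_notMem e y v.2), add_zero]
  rw [← e.symm.sum_comp]
  simp_rw [crossCoords_symm, Fintype.sum_prod_type, Fin.sum_univ_two, signPart_add]

theorem isIndepPoint_crossCoords (e : S ≃ ι × Fin 2)
    (he : ∀ x y : S, G.Adj x y → (e x).1 = (e y).1) {y : ι → ℝ} (hy : ∑ p, |y p| = 1) :
    IsIndepPoint G S (crossCoords e y) := by
  have hmem : ∀ v, crossCoords e y v ≠ 0 → v ∈ S := fun v hv => by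
    by_contra h
    exact hv (crossCoords_of_notMem e y h)
  refine ⟨by rw [sum_crossCoords, hy], fun v => ?_, hmem, fun u v hu hv ha => ?_⟩
  · by_cases hv : v ∈ S
    · simp only [crossCoords, hv, dif_pos]
      exact signPart_nonneg _ _
    · rw [crossCoords_of_notMem e y hv]
  · obtain ⟨p, hp⟩ := e.symm.surjective ⟨u, hmem u hu⟩
    obtain ⟨q, hq⟩ := e.symm.surjective ⟨v, hmem v hv⟩
    obtain rfl : ↑(e.symm p) = u := congrArg Subtype.val hp
    obtain rfl : ↑(e.symm q) = v := congrArg Subtype.val hq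
    have h1 : p.1 = q.1 := by simpa using he _ _ ha
    have h2 : p.2 ≠ q.2 := fun h => G.ne_of_adj ha (by rw [Prod.ext h1 h])
    rw [crossCoords_symm] at hu hv
    rw [h1] at hu
    exact (signPart_eq_zero_or h2 _).elim hu hv

/-- The independence complex of a perfect matching on `S` is a cross-polytope. -/
noncomputable def crossHomeo (e : S ≃ ι × Fin 2) (he : ∀ x y : S, G.Adj x y → (e x).1 = (e y).1)
    (he' : ∀ p, G.Adj (e.symm (p, 0)) (e.symm (p, 1))) :
    (indepOn G S).space ≃ₜ {y : EuclideanSpace ℝ ι // ∑ p, |y p| = 1} where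
  toFun x := ⟨WithLp.toLp 2 (signedCoords e (coords x)), by
    have hx := isIndepPoint_coords x
    have := sum_crossCoords e (signedCoords e (coords x))
    rw [crossCoords_signedCoords e he' hx, hx.sum_eq_one] at this
    exact this.symm⟩
  invFun y := (isIndepPoint_crossCoords e he y.2).point
  left_inv x := coords_injective _ (crossCoords_signedCoords e he' (isIndepPoint_coords x))
  right_inv y := Subtype.ext <| by
    ext p
    exact congrFun (signedCoords_crossCoords e y.1) p
  continuous_toFun := by
    refine Continuous.subtype_mk ((PiLp.continuous_toLp 2 _).comp ?_) _
    have := continuous_coords (indepOn G S)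
    unfold signedCoords
    fun_prop
  continuous_invFun := continuous_of_coords <| (continuous_crossCoords e).comp <|
    (PiLp.continuous_ofLp 2 _).comp continuous_subtype_val

/-- The independence complex of a perfect matching on `S` is a sphere. -/
theorem nonempty_homeo_sphere (e : S ≃ ι × Fin 2)
    (he : ∀ x y : S, G.Adj x y → (e x).1 = (e y).1)
    (he' : ∀ p, G.Adj (e.symm (p, 0)) (e.symm (p, 1))) :
    Nonempty ((indepOn G S).space ≃ₜ Metric.sphere (0 : EuclideanSpace ℝ ι) 1) := by
  refine ⟨((crossHomeo e he he').trans (radialHomeo (fun y : EuclideanSpace ℝ ι => ∑ p, |y p|) (‖·‖) (by fun_prop)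
    continuous_norm ?_ ?_ ?_ fun x => norm_pos_iff.2)).trans
    (Homeomorph.setCongr (s := {x | ‖x‖ = 1}) (by ext; simp))⟩
  · intro c hc x
    simp [abs_mul, abs_of_nonneg hc, Finset.mul_sum]
  · intro c hc x
    rw [norm_smul, Real.norm_of_nonneg hc]
  · intro x hx
    obtain ⟨p, hp⟩ : ∃ p, x p ≠ 0 := by
      by_contra! h
      exact hx (by ext p; exact h p)
    exact Finset.sum_pos' (fun _ _ => abs_nonneg _) ⟨p, Finset.mem_univ p, abs_pos.2 hp⟩

end CrossPolytope

end Realization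

section Grid

theorem Yg_adj {m : ℕ} (x y : Yset m) :
    (Yg m).Adj x y ↔
      ((x.1.1.val + 1 = y.1.1 ∨ y.1.1.val + 1 = x.1.1) ∧ x.1.2.1 = y.1.2.1 ∧ x.1.2.2 = y.1.2.2) ∨
      (x.1.1 = y.1.1 ∧ (x.1.2.1.val + 1 = y.1.2.1 ∨ y.1.2.1.val + 1 = x.1.2.1) ∧
        x.1.2.2 = y.1.2.2) ∨
      (x.1.1 = y.1.1 ∧ x.1.2.1 = y.1.2.1 ∧ x.1.2.2 ≠ y.1.2.2) := by
  obtain ⟨⟨i, j, k⟩, hx⟩ := x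
  obtain ⟨⟨i', j', k'⟩, hy⟩ := y
  have hk : (k.val + 1 = k' ∨ k'.val + 1 = k) ↔ k ≠ k' := by omega
  simp only [Yg, Gam, induce_adj, boxProd_adj, pathGraph_adj, Prod.mk.injEq, hk]
  tauto

/-- The vertices of `Y_{m+1}` that survive all folds. -/
def evenPart (m : ℕ) : Set (Yset m) := {x | (x.1.1.val + x.1.2.1.val + m) % 2 = 0}

/-- The pairs of first two coordinates of the vertices in `evenPart m`. -/
abbrev EvenPair (m : ℕ) : Type :=
  {p : Fin (m + 1) × Fin 3 // (p.1.val + p.2.val + m) % 2 = 0}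

/-- The surviving vertices come in pairs differing in the last coordinate only. -/
def evenPartEquiv (m : ℕ) : evenPart m ≃ EvenPair m × Fin 2 where
  toFun x := (⟨(x.1.1.1, x.1.1.2.1), x.2⟩, x.1.1.2.2)
  invFun p := ⟨⟨(p.1.1.1, p.1.1.2, p.2), by
    obtain ⟨⟨⟨i, j⟩, h⟩, k⟩ := p
    constructor <;>
    · intro he
      simp only [Prod.mk.injEq] at he
      obtain ⟨rfl, rfl, -⟩ := he
      simp only [Fin.val_last, Fin.val_one] at h
      omega⟩, p.1.2⟩
  left_inv _ := rfl
  right_inv _ := rfl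

theorem card_evenPair (m : ℕ) :
    Fintype.card (EvenPair m) = ∑ i ∈ Finset.range (m + 1), (if i % 2 = 0 then 2 else 1) := by
  rw [← Finset.sum_range_reflect, ← Fin.sum_univ_eq_sum_range
    (fun i => if (m + 1 - 1 - i) % 2 = 0 then 2 else 1), Fintype.card_subtype, Finset.card_filter,
    Fintype.sum_prod_type]
  refine Finset.sum_congr rfl fun i _ => ?_
  rw [Fin.sum_univ_three]
  have := i.2
  simp only [Fin.val_zero, Fin.val_one, Fin.val_two]
  split_ifs <;> omega

theorem sum_range_two_mul (k : ℕ) :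
    ∑ i ∈ Finset.range (2 * k), (if i % 2 = 0 then 2 else 1) = 3 * k := by
  induction k with
  | zero => rfl
  | succ k ih =>
    rw [Nat.mul_succ, Finset.sum_range_succ, Finset.sum_range_succ, ih, if_pos (by omega),
      if_neg (by omega)]
    ring

theorem evenPart_dismantle {m : ℕ} (v : Yset m) (hv : v ∉ evenPart m) :
    ∃ u ∈ evenPart m, ∀ x, (Yg m).Adj u x →
      (Yg m).Adj v x ∨ (x ∉ evenPart m ∧ m - x.1.1.val < m - v.1.1.val) := by
  obtain ⟨⟨i, j, k⟩, hY⟩ := v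
  simp only [evenPart, Set.mem_ofPred_eq] at hv
  have hi : i.val < m := by
    by_contra h
    have him : i = Fin.last m := Fin.ext (by simp only [Fin.val_last]; omega)
    have hj : j = 1 := Fin.ext (by simp only [Fin.val_one]; omega)
    subst him hj
    obtain rfl | rfl : k = 0 ∨ k = 1 := by omega
    · exact hY.1 rfl
    · exact hY.2 rfl
  have hu : ((⟨i + 1, by omega⟩, j, 1 - k) : GV (m + 1)) ∈ Yset m := by
    constructor <;>
    · intro he
      simp only [Prod.mk.injEq, Fin.ext_iff, Fin.val_last, Fin.val_one] at he
      omega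
  refine ⟨⟨_, hu⟩, by simp only [evenPart, Set.mem_ofPred_eq]; omega, ?_⟩
  rintro ⟨⟨i', j', k'⟩, hx⟩ h
  rw [Yg_adj] at h ⊢
  simp only [evenPart, Set.mem_ofPred_eq, Fin.ext_iff] at h ⊢
  have hk : (1 - k).val = 1 - k.val := by
    obtain rfl | rfl : k = 0 ∨ k = 1 := by omega
    all_goals rfl
  omega

theorem nonempty_homotopyEquiv_Yg {m N : ℕ}
    (hN : ∑ i ∈ Finset.range (m + 1), (if i % 2 = 0 then 2 else 1) = N) :
    Nonempty (ContinuousMap.HomotopyEquiv (indepCpx (Yg m)).space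
      (Metric.sphere (0 : EuclideanSpace ℝ (Fin N)) 1)) := by
  obtain ⟨fold⟩ := nonempty_homotopyEquiv_dismantle (G := Yg m) (evenPart m)
    (fun x => m - x.1.1.val) evenPart_dismantle Set.univ (Set.subset_univ _)
  let index : EvenPair m ≃ Fin N := Fintype.equivFinOfCardEq ((card_evenPair m).trans hN)
  let e : evenPart m ≃ Fin N × Fin 2 :=
    (evenPartEquiv m).trans (index.prodCongr (Equiv.refl _))
  obtain ⟨homeo⟩ := nonempty_homeo_sphere (G := Yg m) e
    (by
      rintro ⟨⟨⟨i, j, k⟩, hx⟩, hS⟩ ⟨⟨⟨i', j', k'⟩, hx'⟩, hS'⟩ ha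
      rw [Yg_adj] at ha
      refine congrArg index (Subtype.ext (Prod.ext ?_ ?_)) <;>
      · simp only [evenPart, Set.mem_ofPred_eq, Fin.ext_iff] at ha hS hS' ⊢
        omega)
    (by
      intro p
      rw [Yg_adj]
      exact Or.inr (Or.inr ⟨rfl, rfl, Fin.zero_ne_one⟩))
  exact ⟨((indepCpxHomeo (Yg m)).toHomotopyEquiv.trans fold).trans homeo.toHomotopyEquiv⟩

end Grid

/-- Lemma 6.3: the independence complex of `Y_{2k}` is homotopy equivalent to
`S^{3k-1}`, and the independence complex of `Y_{2k+1}` is homotopy equivalent to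
`S^{3k+1}`. -/
theorem indep_Y_homotopyEquiv :
    (∀ k : ℕ, 1 ≤ k → Nonempty (ContinuousMap.HomotopyEquiv
      (indepCpx (Yg (2 * k - 1))).space
      (Metric.sphere (0 : EuclideanSpace ℝ (Fin (3 * k))) 1))) ∧
    (∀ k : ℕ, Nonempty (ContinuousMap.HomotopyEquiv
      (indepCpx (Yg (2 * k))).space
      (Metric.sphere (0 : EuclideanSpace ℝ (Fin (3 * k + 2))) 1))) := by
  refine ⟨fun k hk => nonempty_homotopyEquiv_Yg ?_, fun k => nonempty_homotopyEquiv_Yg ?_⟩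
  · rw [Nat.sub_add_cancel (by omega), sum_range_two_mul]
  · rw [Finset.sum_range_succ, sum_range_two_mul, if_pos (by omega)]
end
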